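/- arXiv:2004.05677 — 3 statements merged into one kernel-verified Lean document; each statement's English description precedes it below -/
import Mathlib

section
/- Let p be an odd prime, n ≥ 1, q = p^(2^n), and G = PGL₂(F_q). Fix an involution x ∈ G not lying in the image of SL₂(F_q) in G. Then the number of Klein four-subgroups of G containing x is exactly (q+1)/2, and every such Klein four-subgroup is contained in the centralizer C_G(x). -/
open Matrix

/-- `PGL₂(F)`: the projective general linear group, i.e. the quotient of `GL₂(F)`
by its center. -/
abbrev ProjectiveGL2 (F : Type) [Field F] : Type :=
  Matrix.GeneralLinearGroup (Fin 2) F ⧸ Subgroup.center (Matrix.GeneralLinearGroup (Fin 2) F)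

/-- The image of the natural map `SL₂(F) → PGL₂(F)`: the socle of `PGL₂(F)`,
isomorphic to `PSL₂(F)`. -/
def socleSL2 (F : Type) [Field F] : Subgroup (ProjectiveGL2 F) :=
  ((QuotientGroup.mk' (Subgroup.center (Matrix.GeneralLinearGroup (Fin 2) F))).comp
    Matrix.SpecialLinearGroup.toGL).range

/-- Two invertible matrices agree in `PGL₂` iff they are proportional. -/
lemma pgl_mk_eq_iff {F : Type} [Field F] (A B : GL (Fin 2) F) :
    ((A : ProjectiveGL2 F) = (B : ProjectiveGL2 F)) ↔ ∃ r : F, B.val = r • A.val := by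
  rw [QuotientGroup.eq, Matrix.GeneralLinearGroup.mem_center_iff_val_mem_range_scalar]
  constructor
  · rintro ⟨r, hr⟩
    refine ⟨r, ?_⟩
    have h : B.val = A.val * (A⁻¹ * B).val := by
      rw [← Units.val_mul, mul_inv_cancel_left]
    rw [h, ← hr, Matrix.scalar_apply, ← Matrix.smul_one_eq_diagonal]
    simp
  · rintro ⟨r, hr⟩
    refine ⟨r, ?_⟩
    rw [Units.val_mul, hr, Matrix.mul_smul, ← Units.val_mul, inv_mul_cancel, Matrix.scalar_apply,
      ← Matrix.smul_one_eq_diagonal, Units.val_one]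

lemma pgl_mk_eq_one_iff {F : Type} [Field F] (A : GL (Fin 2) F) :
    ((A : ProjectiveGL2 F) = 1) ↔ A.val 0 1 = 0 ∧ A.val 1 0 = 0 ∧ A.val 0 0 = A.val 1 1 := by
  have := pgl_mk_eq_iff 1 A
  rw [QuotientGroup.mk_one] at this
  rw [eq_comm, this]
  constructor
  · rintro ⟨r, hr⟩
    rw [hr]; simp
  · rintro ⟨h1, h2, h3⟩
    refine ⟨A.val 0 0, ?_⟩
    ext i j
    fin_cases i <;> fin_cases j <;> simp [h1, h2, h3]

/-- An element of order two in `PGL₂` is represented by a traceless matrix. -/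
lemma pgl_trace_zero {F : Type} [Field F] (A : GL (Fin 2) F)
    (h1 : (A : ProjectiveGL2 F) ≠ 1) (h2 : (A : ProjectiveGL2 F) * A = 1) :
    A.val 1 1 = - A.val 0 0 := by
  rw [← QuotientGroup.mk_mul, pgl_mk_eq_one_iff] at h2
  rw [Ne, pgl_mk_eq_one_iff] at h1
  simp only [Units.val_mul, Matrix.mul_apply, Fin.sum_univ_two] at h2
  obtain ⟨e1, e2, e3⟩ := h2
  by_contra hne
  have ht : A.val 0 0 + A.val 1 1 ≠ 0 := fun h => hne (by linear_combination h)
  apply h1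
  refine ⟨?_, ?_, ?_⟩
  · apply (mul_left_inj' ht).1; linear_combination e1
  · apply (mul_left_inj' ht).1; linear_combination e2
  · apply (mul_left_inj' ht).1; linear_combination e3

/-- A nonscalar element whose determinant is a nonsquare. -/
lemma outer_det {F : Type} [Field F] (A : GL (Fin 2) F)
    (h : (A : ProjectiveGL2 F) ∉ socleSL2 F) : ¬ IsSquare A.val.det := by
  rintro ⟨s, hs⟩
  apply h
  have hdet : A.val.det ≠ 0 := ((Matrix.isUnit_iff_isUnit_det _).1 A.isUnit).ne_zero
  have hs0 : s ≠ 0 := by rintro rfl; simp [hs] at hdet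
  have hd : (s⁻¹ • A.val).det = 1 := by
    rw [Matrix.det_smul, hs]; simp; field_simp
  let S : Matrix.SpecialLinearGroup (Fin 2) F := ⟨s⁻¹ • A.val, hd⟩
  have hS : (Matrix.SpecialLinearGroup.toGL S).val = s⁻¹ • A.val := rfl
  refine ⟨S, ?_⟩
  change ((Matrix.SpecialLinearGroup.toGL S : GL (Fin 2) F) : ProjectiveGL2 F) = A
  rw [pgl_mk_eq_iff]
  refine ⟨s, ?_⟩
  rw [hS, smul_smul, mul_inv_cancel₀ hs0, one_smul]

/-- The set of involutions of the centralizer of `x`, other than `x`. -/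
def kleinPartners {G : Type} [Group G] (x : G) : Set G :=
  {y | y * x = x * y ∧ y * y = 1 ∧ y ≠ 1 ∧ y ≠ x}

/-- The subgroup `{1, x, y, xy}`. -/
def kleinSub {G : Type} [Group G] (x y : G) (hx : x * x = 1) (hy : y * y = 1)
    (hc : y * x = x * y) : Subgroup G where
  carrier := {x * y, x, y, 1}
  one_mem' := by simp
  mul_mem' := by
    have h1 : x * (x * y) = y := by rw [← mul_assoc, hx, one_mul]
    have h2 : x * y * y = x := by rw [mul_assoc, hy, mul_one]
    have h3 : x * y * x = y := by rw [mul_assoc, hc, h1]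
    have h4 : y * (x * y) = x := by rw [← mul_assoc, hc, h2]
    have h5 : x * y * (x * y) = 1 := by rw [← mul_assoc, h3, hy]
    rintro a b (rfl | rfl | rfl | rfl) (rfl | rfl | rfl | rfl) <;>
      simp [hx, hy, hc, h1, h2, h3, h4, h5]
  inv_mem' := by
    have hxi : x⁻¹ = x := inv_eq_of_mul_eq_one_left hx
    have hyi : y⁻¹ = y := inv_eq_of_mul_eq_one_left hy
    rintro a (rfl | rfl | rfl | rfl) <;> simp [hxi, hyi, hc]

lemma kleinSub_isKleinFour {G : Type} [Group G] (x y : G) (hx : x * x = 1) (hy : y * y = 1)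
    (hc : y * x = x * y) (hx1 : x ≠ 1) (hy1 : y ≠ 1) (hyx : y ≠ x) :
    IsKleinFour (kleinSub x y hx hy hc) := by
  have h1 : x * (x * y) = y := by rw [← mul_assoc, hx, one_mul]
  have h3 : x * y * x = y := by rw [mul_assoc, hc, h1]
  have h5 : x * y * (x * y) = 1 := by rw [← mul_assoc, h3, hy]
  have hxy : x * y ≠ 1 := fun h => hyx (by rw [← h1, h, mul_one])
  refine ⟨?_, ?_⟩
  · change Nat.card ({x * y, x, y, 1} : Set G) = 4
    rw [Nat.card_coe_set_eq, Set.ncard_insert_of_notMem, Set.ncard_insert_of_notMem,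
      Set.ncard_pair hy1]
    · simp [hx1, hyx.symm]
    · simp [hx1, hy1, hxy]
  · refine Nat.Prime.eq_one_or_self_of_dvd Nat.prime_two _ ?_ |>.resolve_left ?_
    · apply Monoid.exponent_dvd_of_forall_pow_eq_one
      rintro ⟨a, ha⟩
      apply Subtype.ext
      simp only [pow_two, Subgroup.coe_mul, Subgroup.coe_one]
      rcases ha with rfl | rfl | rfl | rfl
      · exact h5
      · exact hx
      · exact hy
      · simp
    · rw [Monoid.exp_eq_one_iff]
      intro hs
      have := Subsingleton.elim (⟨x, Or.inr (Or.inl rfl)⟩ : kleinSub x y hx hy hc) 1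
      exact hx1 (congrArg Subtype.val this)

lemma klein_carrier {G : Type} [Group G] (V : Subgroup G) (hV : IsKleinFour V) (x y : G)
    (hxV : x ∈ V) (hyV : y ∈ V) (hx1 : x ≠ 1) (hy1 : y ≠ 1) (hyx : y ≠ x) (z : G) :
    z ∈ V ↔ z = x * y ∨ z = x ∨ z = y ∨ z = 1 := by
  constructor
  · intro hz
    by_contra! hcon
    obtain ⟨c1, c2, c3, c4⟩ := hcon
    apply c1
    have := IsKleinFour.eq_mul_of_ne_all (G := V) (x := ⟨x, hxV⟩) (y := ⟨y, hyV⟩) (z := ⟨z, hz⟩)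
      (by simpa [Subtype.ext_iff] using hx1) (by simpa [Subtype.ext_iff] using hy1)
      (by simpa [Subtype.ext_iff] using hyx.symm) (by simpa [Subtype.ext_iff] using c4)
      (by simpa [Subtype.ext_iff] using c2) (by simpa [Subtype.ext_iff] using c3)
    exact congrArg Subtype.val this
  · rintro (rfl | rfl | rfl | rfl)
    · exact V.mul_mem hxV hyV
    · exact hxV
    · exact hyV
    · exact V.one_mem

lemma klein_mem_mul {G : Type} [Group G] (V : Subgroup G) (hV : IsKleinFour V) {y : G}
    (hyV : y ∈ V) : y * y = 1 :=
  congrArg Subtype.val (IsKleinFour.mul_self (⟨y, hyV⟩ : V))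

lemma klein_mem_comm {G : Type} [Group G] (V : Subgroup G) (hV : IsKleinFour V) {x y : G}
    (hxV : x ∈ V) (hyV : y ∈ V) : y * x = x * y :=
  congrArg Subtype.val
    (mul_comm_of_exponent_two (IsKleinFour.exponent_two (G := V)) ⟨y, hyV⟩ ⟨x, hxV⟩)

/-- Double counting. -/
lemma klein_count {G : Type} [Group G] [Finite G] (x : G) (hx : x * x = 1) (hx1 : x ≠ 1) :
    (kleinPartners x).ncard = 2 * {V : Subgroup G | IsKleinFour V ∧ x ∈ V}.ncard := by
  classical
  have := Fintype.ofFinite G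
  have := Fintype.ofFinite (Subgroup G)
  let f : G → Subgroup G := fun y =>
    if h : y ∈ kleinPartners x then kleinSub x y hx h.2.1 h.1 else ⊥
  rw [Set.ncard_eq_toFinset_card', Set.ncard_eq_toFinset_card',
    Finset.card_eq_sum_card_fiberwise (f := f)
      (t := {V : Subgroup G | IsKleinFour V ∧ x ∈ V}.toFinset)]
  · rw [mul_comm, ← smul_eq_mul, ← Finset.sum_const]
    apply Finset.sum_congr rfl
    intro V hV
    simp only [Set.mem_toFinset, Set.mem_ofPred_eq] at hV
    obtain ⟨hV, hxV⟩ := hV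
    have hkey : ∀ y, (y ∈ kleinPartners x ∧ f y = V) ↔ (y ∈ V ∧ y ≠ 1 ∧ y ≠ x) := by
      intro y
      constructor
      · rintro ⟨hy, rfl⟩
        refine ⟨?_, hy.2.2⟩
        simp only [f, dif_pos hy]
        exact Or.inr (Or.inr (Or.inl rfl))
      · rintro ⟨hyV, hy1, hyx⟩
        have hy : y ∈ kleinPartners x :=
          ⟨klein_mem_comm V hV hxV hyV, klein_mem_mul V hV hyV, hy1, hyx⟩
        refine ⟨hy, ?_⟩
        simp only [f, dif_pos hy]
        ext z
        rw [klein_carrier V hV x y hxV hyV hx1 hy1 hyx]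
        rfl
    -- pick some partner
    have hex : ∃ y ∈ V, y ≠ 1 ∧ y ≠ x := by
      by_contra! hcon
      have hsub : (V : Set G) ⊆ {1, x} := by
        intro y hy
        by_cases h : y = 1
        · exact Or.inl h
        · exact Or.inr (hcon y hy h)
      have h4 := Set.ncard_le_ncard hsub
      have h2 := Set.ncard_pair (Ne.symm hx1)
      have h5 : (V : Set G).ncard = 4 := hV.card_four
      omega
    obtain ⟨y, hyV, hy1, hyx⟩ := hex
    have h1 : x * (x * y) = y := by rw [← mul_assoc, hx, one_mul]
    have : {a ∈ (kleinPartners x).toFinset | f a = V} = {y, x * y} := by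
      ext z
      rw [Finset.mem_filter, Set.mem_toFinset, hkey,
        klein_carrier V hV x y hxV hyV hx1 hy1 hyx]
      simp only [Finset.mem_insert, Finset.mem_singleton]
      constructor
      · rintro ⟨_ | _ | _ | _, _, _⟩ <;> simp_all
      · rintro (rfl | rfl)
        · exact ⟨Or.inr (Or.inr (Or.inl rfl)), hy1, hyx⟩
        · refine ⟨Or.inl rfl, fun h => hyx ?_, fun h => hy1 ?_⟩
          · rw [← h1, h, mul_one]
          · rw [← h1, h, hx]
    rw [this, Finset.card_pair]
    intro h
    exact hx1 (by simpa using h.symm)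
  · intro y hy
    simp only [Set.coe_toFinset] at hy ⊢
    simp only [f, dif_pos hy]
    exact ⟨kleinSub_isKleinFour x y hx _ _ hx1 hy.2.2.1 hy.2.2.2, Or.inr (Or.inl rfl)⟩

/-- The traceless matrix orthogonal to `!![a, b; c, -a]` with left column `(u, w)`. -/
def antiMat {F : Type} [Field F] (a b c u w : F) : Matrix (Fin 2) (Fin 2) F :=
  !![u, -(2 * a * u + b * w) / c; w, -u]

lemma antiMat_det {F : Type} [Field F] (a b c u w : F) (hd : ¬ IsSquare (a * a + b * c))
    (huw : u ≠ 0 ∨ w ≠ 0) : (antiMat a b c u w).det ≠ 0 := by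
  have hc : c ≠ 0 := by rintro rfl; exact hd ⟨a, by ring⟩
  intro h
  rw [antiMat, Matrix.det_fin_two_of] at h
  have hquad : c * u * u - 2 * a * u * w - b * w * w = 0 := by
    field_simp at h
    linear_combination -h
  by_cases hw : w = 0
  · subst hw
    have hu : u ≠ 0 := by simpa using huw
    have : c * u * u = 0 := by linear_combination hquad
    simp [hc, hu] at this
  · apply hd
    refine ⟨(c * u - a * w) / w, ?_⟩
    field_simp
    linear_combination -c * hquad

/-- The corresponding element of `PGL₂`. -/
noncomputable def antiElt {F : Type} [Field F] (a b c : F) (hd : ¬ IsSquare (a * a + b * c))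
    (t : Option F) : GL (Fin 2) F :=
  match t with
  | none => Matrix.GeneralLinearGroup.mkOfDetNeZero (antiMat a b c 1 0)
      (antiMat_det a b c 1 0 hd (Or.inl one_ne_zero))
  | some t => Matrix.GeneralLinearGroup.mkOfDetNeZero (antiMat a b c t 1)
      (antiMat_det a b c t 1 hd (Or.inr one_ne_zero))

lemma antiElt_none {F : Type} [Field F] (a b c : F) (hd : ¬ IsSquare (a * a + b * c)) :
    (antiElt a b c hd none).val = antiMat a b c 1 0 := rfl

lemma antiElt_some {F : Type} [Field F] (a b c : F) (hd : ¬ IsSquare (a * a + b * c)) (t : F) :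
    (antiElt a b c hd (some t)).val = antiMat a b c t 1 := rfl

lemma antiElt_shape {F : Type} [Field F] (a b c : F) (hd : ¬ IsSquare (a * a + b * c))
    (t : Option F) : ∃ u w, (u ≠ 0 ∨ w ≠ 0) ∧ (antiElt a b c hd t).val = antiMat a b c u w := by
  cases t with
  | none => exact ⟨1, 0, Or.inl one_ne_zero, rfl⟩
  | some t => exact ⟨t, 1, Or.inr one_ne_zero, rfl⟩

lemma antiElt_injective {F : Type} [Field F] (a b c : F) (hd : ¬ IsSquare (a * a + b * c)) :
    Function.Injective (fun t => (antiElt a b c hd t : ProjectiveGL2 F)) := by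
  intro s t h
  obtain ⟨r, hr⟩ := (pgl_mk_eq_iff _ _).1 h
  have h0 := congrFun (congrFun hr 0) 0
  have h1 := congrFun (congrFun hr 1) 0
  cases s <;> cases t <;>
    simp only [antiElt_none, antiElt_some, antiMat, Matrix.smul_apply, Matrix.of_apply,
      Matrix.cons_val_zero, Matrix.cons_val_one, Matrix.cons_val', smul_eq_mul, mul_one,
      mul_zero, Matrix.cons_val_fin_one, zero_ne_one, one_ne_zero] at h0 h1
  · rfl
  · subst h1; simp at h0
  · subst h1; simp [h0]

/-- The involutions of the centralizer of `x` other than `x` form a projective line. -/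
lemma partners_eq_range {F : Type} [Field F] (h2 : (2 : F) ≠ 0) (a b c : F)
    (hd : ¬ IsSquare (a * a + b * c)) (A : GL (Fin 2) F) (hA : A.val = !![a, b; c, -a]) :
    kleinPartners (A : ProjectiveGL2 F)
      = Set.range (fun t => (antiElt a b c hd t : ProjectiveGL2 F)) := by
  have hc : c ≠ 0 := by rintro rfl; exact hd ⟨a, by ring⟩
  have hd0 : a * a + b * c ≠ 0 := fun h => hd ⟨0, by simpa using h⟩
  ext y
  constructor
  · induction y using QuotientGroup.induction_on with
    | H B =>
    rintro ⟨hcomm, hsq, hne1, hnex⟩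
    have htr := pgl_trace_zero B hne1 hsq
    rw [← QuotientGroup.mk_mul, ← QuotientGroup.mk_mul, pgl_mk_eq_iff] at hcomm
    obtain ⟨r, hr⟩ := hcomm
    obtain ⟨u, hu⟩ : ∃ u, u = B.val 0 0 := ⟨_, rfl⟩
    obtain ⟨v, hv⟩ : ∃ v, v = B.val 0 1 := ⟨_, rfl⟩
    obtain ⟨w, hw⟩ : ∃ w, w = B.val 1 0 := ⟨_, rfl⟩
    have hB : B.val = !![u, v; w, -u] := by
      rw [← hu] at htr
      ext i j
      fin_cases i <;> fin_cases j <;> simp [hu, hv, hw, htr]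
    have hdet : B.val.det ≠ 0 := ((Matrix.isUnit_iff_isUnit_det _).1 B.isUnit).ne_zero
    rw [hB, Matrix.det_fin_two_of] at hdet
    rw [Units.val_mul, Units.val_mul, hA, hB] at hr
    have e00 := congrFun (congrFun hr 0) 0
    have e01 := congrFun (congrFun hr 0) 1
    have e10 := congrFun (congrFun hr 1) 0
    have e11 := congrFun (congrFun hr 1) 1
    simp [Matrix.mul_apply, Fin.sum_univ_two] at e00 e01 e10 e11
    -- the trace of the product vanishes
    have key : 2 * a * u + b * w + c * v = 0 := by
      by_contra hk
      have hr1 : r = 1 := by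
        have : (r - 1) * (2 * a * u + b * w + c * v) = 0 := by
          linear_combination -e00 - e11
        rcases mul_eq_zero.1 this with h | h
        · linear_combination h
        · exact absurd h hk
      subst hr1
      have f1 : b * w = c * v := by
        linear_combination e00
      have f2 : a * v = b * u := by
        apply (mul_right_inj' h2).1; linear_combination e01
      have f3 : c * u = a * w := by
        apply (mul_right_inj' h2).1; linear_combination e10
      apply hnex
      rw [eq_comm, pgl_mk_eq_iff]
      refine ⟨w / c, ?_⟩
      rw [hB, hA]
      ext i j
      fin_cases i <;> fin_cases j <;> simp <;> field_simp
      · linear_combination f3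
      · linear_combination -f1
      · linear_combination f3
    have hv' : v = -(2 * a * u + b * w) / c := by
      field_simp; linear_combination key
    by_cases hw0 : w = 0
    · refine ⟨none, ?_⟩
      change ((antiElt a b c hd none : GL (Fin 2) F) : ProjectiveGL2 F) = B
      rw [pgl_mk_eq_iff]
      refine ⟨u, ?_⟩
      rw [antiElt_none, hB, hv', hw0, antiMat]
      ext i j
      fin_cases i <;> fin_cases j <;> simp <;> field_simp
    · refine ⟨some (u / w), ?_⟩
      change ((antiElt a b c hd (some (u / w)) : GL (Fin 2) F) : ProjectiveGL2 F) = B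
      rw [pgl_mk_eq_iff]
      refine ⟨w, ?_⟩
      rw [antiElt_some, hB, hv', antiMat]
      ext i j
      fin_cases i <;> fin_cases j <;> simp <;> field_simp
  · rintro ⟨t, rfl⟩
    obtain ⟨u, w, huw, hB⟩ := antiElt_shape a b c hd t
    change ((antiElt a b c hd t : GL (Fin 2) F) : ProjectiveGL2 F) ∈ _
    generalize antiElt a b c hd t = B at hB
    refine ⟨?_, ?_, ?_, ?_⟩
    · rw [← QuotientGroup.mk_mul, ← QuotientGroup.mk_mul, pgl_mk_eq_iff]
      refine ⟨-1, ?_⟩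
      rw [Units.val_mul, Units.val_mul, hA, hB, antiMat]
      ext i j
      fin_cases i <;> fin_cases j <;> simp [Matrix.mul_apply, Fin.sum_univ_two] <;>
        field_simp <;> ring
    · rw [← QuotientGroup.mk_mul, pgl_mk_eq_one_iff, Units.val_mul, hB, antiMat]
      simp [Matrix.mul_apply, Fin.sum_univ_two]
      refine ⟨by ring, by ring, by ring⟩
    · rw [Ne, pgl_mk_eq_one_iff, hB, antiMat]
      simp
      intro _ hw hu
      have hu' : u = 0 := by
        apply (mul_right_inj' h2).1; linear_combination hu
      simp [hw, hu'] at huw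
    · rw [Ne, eq_comm, pgl_mk_eq_iff, hA, hB, antiMat]
      rintro ⟨r, hr⟩
      have e00 := congrFun (congrFun hr 0) 0
      have e01 := congrFun (congrFun hr 0) 1
      have e10 := congrFun (congrFun hr 1) 0
      simp at e00 e01 e10
      have hz : r * (2 * (a * a + b * c)) = 0 := by
        rw [e00, e10] at e01
        field_simp at e01
        linear_combination -e01
      have hr0 : r = 0 := by
        rcases mul_eq_zero.1 hz with h | h
        · exact h
        · exact absurd h (mul_ne_zero h2 hd0)
      simp [e00, e10, hr0] at huw

/-- An outer involution `x` of `PGL₂(q)` lies in exactly `(q+1)/2` Klein four-subgroups,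
all of which are contained in the centralizer of `x`. -/
theorem count_klein_four_containing_outer_involution (p n : ℕ) (hp : Nat.Prime p) (hodd : Odd p) (hn : 1 ≤ n)
    (F : Type) [Field F] [Fintype F] (hF : Fintype.card F = p ^ 2 ^ n)
    (x : ProjectiveGL2 F) (hx : orderOf x = 2) (hxS : x ∉ socleSL2 F) :
    {V : Subgroup (ProjectiveGL2 F) | IsKleinFour ↥V ∧ x ∈ V}.ncard
      = (p ^ 2 ^ n + 1) / 2 ∧
    ∀ V : Subgroup (ProjectiveGL2 F), IsKleinFour ↥V → x ∈ V →
      V ≤ Subgroup.centralizer {x} := by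
  have hcard4 : Fintype.card F % 4 = 1 := by
    obtain ⟨m, rfl⟩ : ∃ m, n = m + 1 := ⟨n - 1, by omega⟩
    have ho : Odd (p ^ 2 ^ m) := hodd.pow
    obtain ⟨k, hk⟩ := ho
    rw [hF, pow_succ, pow_mul, hk]
    ring_nf
    omega
  have h2 : (2 : F) ≠ 0 := by
    apply Ring.two_ne_zero
    intro h
    have := FiniteField.even_card_iff_char_two.1 h
    omega
  have hneg : IsSquare (-1 : F) := FiniteField.isSquare_neg_one_iff.2 (by omega)
  have hx1 : x ≠ 1 := by rintro rfl; simp at hx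
  have hxx : x * x = 1 := by
    have h := pow_orderOf_eq_one x
    rwa [hx, pow_two] at h
  refine ⟨?_, ?_⟩
  · have hcount := klein_count x hxx hx1
    have hY : (kleinPartners x).ncard = Fintype.card F + 1 := by
      clear hcount hx
      induction x using QuotientGroup.induction_on with
      | H A =>
      have htr := pgl_trace_zero A hx1 hxx
      have hns := outer_det A hxS
      have hA : A.val = !![A.val 0 0, A.val 0 1; A.val 1 0, - A.val 0 0] := by
        ext i j
        fin_cases i <;> fin_cases j <;> simp [htr]
      have hd : ¬ IsSquare (A.val 0 0 * A.val 0 0 + A.val 0 1 * A.val 1 0) := by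
        intro h
        apply hns
        obtain ⟨s, hs⟩ := hneg.mul h
        refine ⟨s, ?_⟩
        rw [Matrix.det_fin_two, htr]
        linear_combination hs
      rw [partners_eq_range h2 _ _ _ hd A hA, ← Set.image_univ,
        Set.ncard_image_of_injective _ (antiElt_injective _ _ _ hd), Set.ncard_univ,
        Nat.card_eq_fintype_card, Fintype.card_option]
    rw [hY, hF] at hcount
    omega
  · intro V hV hxV y hy
    rw [Subgroup.mem_centralizer_singleton_iff]
    exact klein_mem_comm V hV hxV hy
end

section
/- Let p be an odd prime, n ≥ 1, q = p^(2^n), and G = PGL₂(F_q). Fix an involution x ∈ G not lying in the image of SL₂(F_q) in G. If H is a proper subgroup of G with ⟨x⟩ < H and H is an intersection of a (nonempty) family of maximal subgroups of G, then H is isomorphic to the dihedral group of order 2(q+1), or to the dihedral group of order 2(q−1), or to the Klein four-group. -/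
open Matrix

section Counting
set_option linter.unusedSectionVars false
open Finset

open Classical in
/-- number of elements of the group satisfying `pr` and fixing `P`. -/
noncomputable def cntFix {M X : Type} [Group M] [Fintype M] [MulAction M X] (pr : M → Prop) (P : X) : ℕ :=
  (univ.filter (fun g : M => pr g ∧ g • P = P)).card

open Classical in
/-- number of fixed points of `g`. -/
noncomputable def nFix {M : Type} (X : Type) [Group M] [Fintype X] [MulAction M X] (g : M) : ℕ :=
  (univ.filter (fun P : X => g • P = P)).card

open Classical in
/-- orbit as a finset -/
noncomputable def orbF (M : Type) {X : Type} [Group M] [Fintype X] [MulAction M X] (P : X) : Finset X :=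
  univ.filter (fun Q => Q ∈ MulAction.orbit M P)

variable {M X : Type} [Group M] [Fintype M] [Fintype X] [MulAction M X]

lemma cntFix_eq (pr : M → Prop) (P : X) [DecidablePred (fun g : M => pr g ∧ g • P = P)] :
    cntFix pr P = (univ.filter (fun g : M => pr g ∧ g • P = P)).card := by
  unfold cntFix
  congr

lemma sum_cntFix (pr : M → Prop) [DecidablePred pr] :
    ∑ P : X, cntFix pr P = ∑ g ∈ univ.filter (fun g : M => pr g), nFix X g := by
  classical
  simp only [cntFix, nFix, card_filter]
  rw [sum_comm, sum_filter]
  refine sum_congr rfl fun g _ => ?_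
  split_ifs with h <;> simp [h]

lemma cntFix_smul (pr : M → Prop) (hc : ∀ g h : M, pr g → pr (h * g * h⁻¹)) (h : M) (P : X) :
    cntFix pr (h • P) = cntFix pr P := by
  classical
  unfold cntFix
  symm
  refine card_bij' (fun g _ => h * g * h⁻¹) (fun g _ => h⁻¹ * g * h) ?_ ?_ ?_ ?_
  · intro g hg
    simp only [mem_filter, mem_univ, true_and] at hg ⊢
    exact ⟨hc _ _ hg.1, by simp [mul_smul, hg.2]⟩
  · intro g hg
    simp only [mem_filter, mem_univ, true_and] at hg ⊢
    refine ⟨by simpa using hc g h⁻¹ hg.1, by rw [mul_smul, mul_smul, hg.2]; simp⟩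
  · intro g _; group
  · intro g _; group

lemma mem_orbF {P Q : X} : Q ∈ orbF M P ↔ ∃ g : M, g • P = Q := by
  classical
  simp [orbF, MulAction.mem_orbit_iff]

lemma orbF_card_mul (P : X) :
    (orbF M P).card * cntFix (fun _ : M => True) P = Fintype.card M := by
  classical
  have := MulAction.card_orbit_mul_card_stabilizer_eq_card_group M P
  rw [← this]
  congr 1
  · rw [orbF, Fintype.card_subtype]
  · rw [cntFix, Fintype.card_subtype]
    congr 1; ext g; simp

lemma sum_split (Y : Finset X) (hY : ∀ (g : M), ∀ P ∈ Y, g • P ∈ Y) (P : X) (hP : P ∈ Y) :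
    ∃ Y' : Finset X, (∀ (g : M), ∀ P ∈ Y', g • P ∈ Y') ∧ (∀ Q, Q ∈ Y' ↔ Q ∈ Y ∧ Q ∉ orbF M P) ∧
    ∀ w : X → ℤ, (∀ (g : M) P, w (g • P) = w P) →
      ∑ Q ∈ Y, w Q = (orbF M P).card * w P + ∑ Q ∈ Y', w Q := by
  classical
  refine ⟨Y \ orbF M P, ?_, by simp, fun w hw => ?_⟩
  · intro g Q hQ
    simp only [mem_sdiff] at hQ ⊢
    refine ⟨hY g Q hQ.1, fun h => hQ.2 ?_⟩
    obtain ⟨k, hk⟩ := mem_orbF.1 h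
    exact mem_orbF.2 ⟨g⁻¹ * k, by rw [mul_smul, hk]; simp⟩
  · have hs : orbF M P ⊆ Y := by
      intro Q hQ
      obtain ⟨k, rfl⟩ := mem_orbF.1 hQ
      exact hY k P hP
    rw [← sum_sdiff hs, add_comm]
    congr 1
    rw [sum_congr rfl (g := fun _ => w P), sum_const, nsmul_eq_mul]
    intro Q hQ
    obtain ⟨k, rfl⟩ := mem_orbF.1 hQ
    exact hw k P

lemma orb_two (P : X) (h : (orbF M P).card = 2) (hg : ∃ g : M, g ≠ 1 ∧ g • P = P) :
    (∃ P P' : X, P ≠ P' ∧ (∀ g : M, (g • P = P ∧ g • P' = P') ∨ (g • P = P' ∧ g • P' = P)) ∧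
      ∃ g : M, g ≠ 1 ∧ g • P = P ∧ g • P' = P') := by
  classical
  have hP : P ∈ orbF M P := mem_orbF.2 ⟨1, one_smul _ _⟩
  obtain ⟨P', hne, hPP'⟩ : ∃ P', P ≠ P' ∧ orbF M P = {P, P'} := by
    obtain ⟨a, b, hab, hO⟩ := card_eq_two.1 h
    rw [hO] at hP
    simp only [mem_insert, mem_singleton] at hP
    rcases hP with rfl | rfl
    · exact ⟨b, hab, hO⟩
    · exact ⟨a, hab.symm, by rw [hO, pair_comm]⟩
  have hm : ∀ g : M, g • P = P ∨ g • P = P' := fun g => by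
    have : g • P ∈ orbF M P := mem_orbF.2 ⟨g, rfl⟩
    rw [hPP'] at this
    simpa using this
  have hm' : ∀ g : M, g • P' = P ∨ g • P' = P' := fun g => by
    have h0 : P' ∈ orbF M P := by rw [hPP']; simp
    obtain ⟨k, hk⟩ := mem_orbF.1 h0
    have : g • P' ∈ orbF M P := mem_orbF.2 ⟨g * k, by rw [mul_smul, hk]⟩
    rw [hPP'] at this
    simpa using this
  have key : ∀ g : M, (g • P = P ∧ g • P' = P') ∨ (g • P = P' ∧ g • P' = P) := fun g => by
    have hinj : g • P ≠ g • P' := fun h => hne (MulAction.injective g h)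
    rcases hm g with h1 | h1 <;> rcases hm' g with h2 | h2
    · exact absurd (h1.trans h2.symm) hinj
    · exact Or.inl ⟨h1, h2⟩
    · exact Or.inr ⟨h1, h2⟩
    · exact absurd (h1.trans h2.symm) hinj
  refine ⟨P, P', hne, key, ?_⟩
  obtain ⟨g, hg1, hg2⟩ := hg
  refine ⟨g, hg1, hg2, ?_⟩
  rcases key g with h | h
  · exact h.2
  · exact absurd (hg2.symm.trans h.1) hne

lemma cntFix_pos {pr : M → Prop} {P : X} : 0 < cntFix pr P ↔ ∃ g : M, pr g ∧ g • P = P := by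
  classical
  rw [cntFix, card_pos]
  simp [Finset.Nonempty]

/-- arithmetic endgame of the case without unipotents. -/
lemma arith_two (e o1 o2 o3 m1 m2 b : ℕ) (h1 : o1 * m1 = e) (h2 : o2 * m2 = e) (h3 : o3 * b = e)
    (he1 : Even m1) (he2 : Even m2) (hm1 : m1 ≠ 4) (hm2 : m2 ≠ 4) (hb : 2 ≤ b) (he : 0 < e)
    (h : o1 + o2 + o3 = e + 2) : o1 = 2 ∨ o2 = 2 ∨ o3 = 2 := by
  have key : ∀ m o : ℕ, o * m = e → Even m → m ≠ 4 → (2 * o = e) ∨ (6 * o ≤ e) := by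
    intro m o hmo hev h4
    obtain ⟨r, hr⟩ := hev
    have : r ≠ 0 := by rintro rfl; simp at hr; subst hr; omega
    by_cases r1 : r = 1
    · left; subst r1; subst hr; omega
    · right
      have : 6 ≤ m := by omega
      nlinarith
  have hb' : 2 * o3 = e ∨ 3 * o3 ≤ e := by
    by_cases b2 : b = 2
    · left; subst b2; omega
    · right
      have : 3 ≤ b := by omega
      nlinarith
  have := key m1 o1 h1 he1 hm1
  have := key m2 o2 h2 he2 hm2
  omega

lemma arith_unip (o1 m1 Q k N : ℕ) (h1 : o1 * m1 = N * (Q * k)) (h2 : o1 + N = 2 + N * (Q - 1))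
    (hk : k ≤ Q - 1) (hN : 2 ≤ N) (hQ : 3 ≤ Q) (hm : Even m1) (hke : Even k) (hk0 : 0 < k) :
    k = Q - 1 ∧ N = Q + 1 := by
  obtain ⟨R, rfl⟩ : ∃ R, Q = R + 3 := ⟨Q - 3, by omega⟩
  obtain ⟨T, rfl⟩ : ∃ T, N = T + 2 := ⟨N - 2, by omega⟩
  have ho : o1 = 2 + (T + 2) * (R + 1) := by
    have : R + 3 - 1 = (R + 1) + 1 := by omega
    rw [this] at h2
    nlinarith
  have hlt : k < m1 := by
    by_contra hcon
    push Not at hcon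
    have : o1 * m1 ≤ o1 * k := Nat.mul_le_mul_left _ hcon
    rw [h1, ho] at this
    nlinarith
  obtain ⟨a, ha⟩ := hm
  obtain ⟨b, hb⟩ := hke
  obtain ⟨j, hj⟩ : ∃ j, a = b + j := ⟨a - b, by omega⟩
  have hj0 : 0 < j := by omega
  have hmk : m1 = k + 2 * j := by omega
  have e1 : j * o1 = k * (T + 1) := by
    rw [hmk, ho] at h1
    rw [ho]
    nlinarith
  have hk' : k ≤ R + 2 := by omega
  have hj1 : j = 1 := by
    by_contra hne
    have : 2 ≤ j := by omega
    have l1 : 2 * o1 ≤ j * o1 := Nat.mul_le_mul_right _ this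
    have l2 : k * (T + 1) ≤ (R + 2) * (T + 1) := Nat.mul_le_mul_right _ hk'
    rw [ho] at l1
    nlinarith
  rw [hj1, one_mul, ho] at e1
  have hk2 : R + 2 ≤ k := by
    by_contra hne
    have : k ≤ R + 1 := by omega
    have := Nat.mul_le_mul_right (T + 1) this
    nlinarith
  have hkk : k = R + 2 := by omega
  refine ⟨by omega, ?_⟩
  rw [hkk] at e1
  nlinarith

set_option maxHeartbeats 2000000 in
/-- The counting theorem. -/
theorem counting (S : M → Prop) (uni : M → Prop)
    (hS1 : S 1) (hSc : ∀ g h : M, S g → S (h * g * h⁻¹)) (hUc : ∀ g h : M, uni g → uni (h * g * h⁻¹))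
    (hSS : ∀ g h, ¬ S g → ((S h ∧ ¬ S (g * h)) ∨ (¬ S h ∧ S (g * h))))
    (hUS : ∀ g, uni g → S g) (hU1 : ∀ g, uni g → g ≠ 1)
    (hUinv : ∀ g, uni g → uni g⁻¹ ∧ g⁻¹ ≠ g)
    (hfo : ∀ g, ¬ S g → nFix X g = 2)
    (hfi : ∀ g, S g → g ≠ 1 → ¬ uni g → nFix X g = 2)
    (hfu : ∀ g, uni g → nFix X g = 1)
    (h4 : ∀ (P : X) (g : M), g • P = P → ¬ S g → cntFix (fun _ : M => True) P ≠ 4)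
    (x : M) (hx : ¬ S x) (P₁ : X) (hP₁ : x • P₁ = P₁) (hP₁u : ∀ g : M, uni g → g • P₁ ≠ P₁) :
    (∃ P P' : X, P ≠ P' ∧ (∀ g : M, (g • P = P ∧ g • P' = P') ∨ (g • P = P' ∧ g • P' = P)) ∧
      ∃ g : M, g ≠ 1 ∧ g • P = P ∧ g • P' = P') ∨
    (∃ P₂ : X, (∃ g : M, ¬ S g ∧ g • P₂ = P₂) ∧ (∃ g : M, uni g ∧ g • P₂ = P₂) ∧
      2 ≤ cntFix uni P₂ ∧ Even (cntFix (fun _ : M => True) P₁) ∧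
      Even (cntFix (fun _ : M => True) P₂) ∧
      (orbF M P₁).card * cntFix (fun _ : M => True) P₁ = Fintype.card M ∧
      (orbF M P₂).card * cntFix (fun _ : M => True) P₂ = Fintype.card M ∧
      (orbF M P₁).card + (orbF M P₂).card = 2 + (orbF M P₂).card * cntFix uni P₂) := by
  classical
  set e := Fintype.card M with he
  have hepos : 0 < e := Fintype.card_pos
  let c : X → ℕ := cntFix (fun _ : M => True)
  let out : X → ℕ := cntFix (fun g : M => ¬ S g)
  let inn : X → ℕ := cntFix (fun g : M => S g ∧ g ≠ 1)
  let u : X → ℕ := cntFix uni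
  have hSc' : ∀ g h : M, ¬ S g → ¬ S (h * g * h⁻¹) := fun g h hg hh => hg (by
    simpa [mul_assoc] using hSc _ h⁻¹ hh)
  have inv_c : ∀ (g : M) P, c (g • P) = c P := fun g P => cntFix_smul _ (fun _ _ _ => trivial) g P
  have inv_out : ∀ (g : M) P, out (g • P) = out P := fun g P => cntFix_smul _ hSc' g P
  have inv_inn : ∀ (g : M) P, inn (g • P) = inn P := fun g P => cntFix_smul _
    (fun g h hg => ⟨hSc g h hg.1, fun hh => hg.2 (by simpa using hh)⟩) g P
  have inv_u : ∀ (g : M) P, u (g • P) = u P := fun g P => cntFix_smul _ hUc g P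
  have hc : ∀ P, c P = out P + inn P + 1 := by
    intro P
    have h1 : (univ.filter (fun g : M => True ∧ g • P = P)) =
      (univ.filter (fun g : M => ¬ S g ∧ g • P = P)) ∪
        ((univ.filter (fun g : M => (S g ∧ g ≠ 1) ∧ g • P = P)) ∪ {1}) := by
      ext g
      simp only [mem_filter, mem_univ, true_and, mem_union, mem_singleton]
      by_cases hg : g = 1
      · subst hg; simp
      · tauto
    show cntFix _ P = _
    rw [cntFix_eq, h1, card_union_of_disjoint, card_union_of_disjoint]
    · simp [out, inn, cntFix_eq, add_assoc]
    · simp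
    · rw [Finset.disjoint_left]
      intro g hg
      simp only [mem_filter, mem_univ, true_and, mem_union, mem_singleton] at hg ⊢
      rintro (h | rfl)
      · exact hg.1 h.1.1
      · exact hg.1 hS1
  have hout : ∀ P, 0 < out P → out P = inn P + 1 := by
    intro P hP
    obtain ⟨g, hgS, hgP⟩ := cntFix_pos.1 hP
    have hgP' : g⁻¹ • P = P := by rw [inv_smul_eq_iff, hgP]
    have h2 : (univ.filter (fun h : M => S h ∧ h • P = P)).card = inn P + 1 := by
      have : (univ.filter (fun h : M => S h ∧ h • P = P)) =
          (univ.filter (fun g : M => (S g ∧ g ≠ 1) ∧ g • P = P)) ∪ {1} := by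
        ext h
        simp only [mem_filter, mem_univ, true_and, mem_union, mem_singleton]
        by_cases hg : h = 1
        · subst hg; simp [hS1]
        · tauto
      rw [this, card_union_of_disjoint (by simp)]
      simp [inn, cntFix_eq]
    rw [← h2]
    show cntFix _ P = _
    rw [cntFix_eq]
    symm
    refine card_bij' (fun h _ => g * h) (fun h _ => g⁻¹ * h) ?_ ?_ ?_ ?_
    · intro h hh
      simp only [mem_filter, mem_univ, true_and] at hh ⊢
      refine ⟨?_, by rw [mul_smul, hh.2, hgP]⟩
      have := hSS g h hgS
      tauto
    · intro h hh
      simp only [mem_filter, mem_univ, true_and] at hh ⊢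
      refine ⟨?_, by rw [mul_smul, hh.2, hgP']⟩
      have := hSS g (g⁻¹ * h) hgS
      rw [mul_inv_cancel_left] at this
      tauto
    · intro h _; group
    · intro h _; group
  have hcardS : (univ.filter (fun g : M => ¬ S g)).card = (univ.filter (fun g : M => S g)).card := by
    symm
    refine card_bij' (fun h _ => x * h) (fun h _ => x⁻¹ * h) ?_ ?_ ?_ ?_
    · intro h hh
      simp only [mem_filter, mem_univ, true_and] at hh ⊢
      have := hSS x h hx
      tauto
    · intro h hh
      simp only [mem_filter, mem_univ, true_and] at hh ⊢
      have := hSS x (x⁻¹ * h) hx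
      rw [mul_inv_cancel_left] at this
      tauto
    · intro h _; group
    · intro h _; group
  have hcardS2 : (univ.filter (fun g : M => S g)).card + (univ.filter (fun g : M => ¬ S g)).card = e := by
    rw [card_filter_add_card_filter_not]; rfl
  have sum_out : ∑ P : X, (out P : ℤ) = e := by
    have : ∑ P : X, out P = e := by
      rw [sum_cntFix, sum_congr rfl (g := fun _ => 2), sum_const, smul_eq_mul]
      · omega
      · intro g hg; exact hfo g (by simpa using hg)
    exact_mod_cast this
  have sum_w : ∑ P : X, ((inn P : ℤ) + u P) = e - 2 := by
    have h1 : ∑ P : X, inn P + ∑ P : X, u P + 2 = e := by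
      show ∑ P : X, cntFix _ P + ∑ P : X, cntFix _ P + 2 = e
      rw [sum_cntFix, sum_cntFix, sum_congr (s₁ := univ.filter (fun g : M => uni g)) rfl (g := fun _ => 1)]
      swap
      · intro g hg; exact hfu g (by simpa using hg)
      have hsub : univ.filter (fun g : M => uni g) ⊆ univ.filter (fun g : M => S g ∧ g ≠ 1) := by
        intro g hg
        simp only [mem_filter, mem_univ, true_and] at hg ⊢
        exact ⟨hUS g hg, hU1 g hg⟩
      rw [← sum_sdiff hsub, add_assoc _ _ (∑ g ∈ _, 1), ← sum_add_distrib,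
        sum_congr (s₁ := univ.filter (fun g : M => uni g)) rfl (g := fun _ => 2)]
      swap
      · intro g hg; rw [hfu g (by simpa using hg)]
      rw [sum_congr (s₁ := _ \ _) rfl (g := fun _ => 2)]
      swap
      · intro g hg
        simp only [mem_filter, mem_univ, true_and, mem_sdiff] at hg
        exact hfi g hg.1.1 hg.1.2 hg.2
      rw [sum_sdiff hsub, sum_const, smul_eq_mul]
      have h3 : (univ.filter (fun g : M => S g)) = insert 1 (univ.filter (fun g : M => S g ∧ g ≠ 1)) := by
        ext h
        simp only [mem_filter, mem_univ, true_and, mem_insert]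
        by_cases hg : h = 1
        · subst hg; simp [hS1]
        · tauto
      rw [h3, card_insert_of_notMem (by simp)] at hcardS hcardS2
      omega
    rw [sum_add_distrib]
    push_cast [← h1]
    ring
  have hu2 : ∀ P, 0 < u P → 2 ≤ u P := by
    intro P hP
    obtain ⟨g, hg, hgP⟩ := cntFix_pos.1 hP
    have := (hUinv g hg)
    have hsub : ({g, g⁻¹} : Finset M) ⊆ univ.filter (fun g : M => uni g ∧ g • P = P) := by
      intro h hh
      simp only [mem_filter, mem_univ, true_and, mem_insert, mem_singleton] at hh ⊢
      rcases hh with rfl | rfl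
      · exact ⟨hg, hgP⟩
      · exact ⟨this.1, by rw [inv_smul_eq_iff, hgP]⟩
    have h2 := card_le_card hsub
    rw [card_pair (Ne.symm this.2), ← cntFix_eq] at h2
    exact h2
  have hui : ∀ P, u P ≤ inn P := by
    intro P
    show cntFix _ P ≤ cntFix _ P
    rw [cntFix_eq, cntFix_eq]
    refine card_le_card ?_
    intro g hg
    simp only [mem_filter, mem_univ, true_and] at hg ⊢
    exact ⟨⟨hUS g hg.1, hU1 g hg.1⟩, hg.2⟩
  have horb : ∀ P : X, (orbF M P).card * c P = e := orbF_card_mul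
  have hnontriv : ∀ P : X, 2 ≤ c P → ∃ g : M, g ≠ 1 ∧ g • P = P := by
    intro P hP
    have h1 : 1 < (univ.filter (fun g : M => True ∧ g • P = P)).card := by
      rw [← cntFix_eq]; exact hP
    obtain ⟨g, hg, hne⟩ := exists_mem_ne h1 1
    simp only [mem_filter, mem_univ, true_and] at hg
    exact ⟨g, hne, hg⟩
  have hself : ∀ P : X, P ∈ orbF M P := fun P => mem_orbF.2 ⟨1, one_smul _ _⟩
  -- first orbit
  have hout1 : 0 < out P₁ := cntFix_pos.2 ⟨x, hx, hP₁⟩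
  have hu1 : u P₁ = 0 := by
    by_contra h
    obtain ⟨g, hg, hgP⟩ := cntFix_pos.1 (Nat.pos_of_ne_zero h)
    exact hP₁u g hg hgP
  obtain ⟨Y1, hY1, hm1, hs1⟩ := sum_split (M := M) (univ : Finset X) (by simp) P₁ (mem_univ _)
  have a1 := hs1 (fun P => (out P : ℤ)) (fun g P => by simp only [inv_out])
  have a2 := hs1 (fun P => (inn P : ℤ) + u P) (fun g P => by simp only [inv_inn, inv_u])
  rw [sum_out] at a1
  rw [sum_w] at a2
  have b1 := hc P₁
  have b2 := hout P₁ hout1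
  have b3 := horb P₁
  have b3' : ((orbF M P₁).card : ℤ) * c P₁ = e := by exact_mod_cast b3
  -- second orbit
  obtain ⟨P₂, hP₂Y, hout2⟩ : ∃ P₂ ∈ Y1, 0 < out P₂ := by
    by_contra hcon
    push Not at hcon
    have : ∑ Q ∈ Y1, (out Q : ℤ) = 0 := sum_eq_zero (fun Q hQ => by
      have := hcon Q hQ
      omega)
    rw [this] at a1
    rw [b1, b2] at b3'
    simp only [b2] at a1
    push_cast at a1 b3'
    have : (e : ℤ) = 0 := by linarith
    omega
  obtain ⟨Y2, hY2, hm2, hs2⟩ := sum_split (M := M) Y1 hY1 P₂ hP₂Y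
  have a3 := hs2 (fun P => (out P : ℤ)) (fun g P => by simp only [inv_out])
  have a4 := hs2 (fun P => (inn P : ℤ) + u P) (fun g P => by simp only [inv_inn, inv_u])
  have d1 := hc P₂
  have d2 := hout P₂ hout2
  have d3 := horb P₂
  have d3' : ((orbF M P₂).card : ℤ) * c P₂ = e := by exact_mod_cast d3
  have hsum0 : ∑ Q ∈ Y2, (out Q : ℤ) = 0 := by
    rw [b1, b2] at b3'
    rw [d1, d2] at d3'
    rw [a3] at a1
    simp only [b2, d2] at a1
    push_cast at a1 b3' d3'
    linarith
  have hout0 : ∀ Q ∈ Y2, out Q = 0 := by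
    intro Q hQ
    have := (sum_eq_zero_iff_of_nonneg (fun Q _ => by positivity)).1 hsum0 Q hQ
    exact_mod_cast this
  -- main equation
  have main : ((orbF M P₁).card : ℤ) + (orbF M P₂).card =
      2 + (orbF M P₂).card * u P₂ + ∑ Q ∈ Y2, ((inn Q : ℤ) + u Q) := by
    rw [b1, b2] at b3'
    rw [d1, d2] at d3'
    rw [a4] at a2
    simp only [hu1] at a2
    push_cast at a2 b3' d3'
    linarith
  have hne12 : P₁ ≠ P₂ := by
    rintro rfl
    exact ((hm1 P₁).1 hP₂Y).2 (hself P₁)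
  have hev1 : Even (c P₁) := ⟨inn P₁ + 1, by omega⟩
  have hev2 : Even (c P₂) := ⟨inn P₂ + 1, by omega⟩
  have hc1 : 2 ≤ c P₁ := by omega
  have hc2 : 2 ≤ c P₂ := by omega
  have ho1 : 2 * (orbF M P₁).card ≤ e := by rw [← b3, mul_comm]; exact Nat.mul_le_mul_left _ hc1
  have ho2 : 2 * (orbF M P₂).card ≤ e := by rw [← d3, mul_comm]; exact Nat.mul_le_mul_left _ hc2
  have hop1 : 0 < (orbF M P₁).card := card_pos.2 ⟨_, hself _⟩
  have hop2 : 0 < (orbF M P₂).card := card_pos.2 ⟨_, hself _⟩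
  by_cases hrest : ∀ Q ∈ Y2, inn Q = 0
  · have hR : ∑ Q ∈ Y2, ((inn Q : ℤ) + u Q) = 0 := sum_eq_zero (fun Q hQ => by
      have := hrest Q hQ
      have := hui Q
      omega)
    rw [hR, add_zero] at main
    by_cases hu : u P₂ = 0
    · left
      rw [hu] at main
      have o1 : (orbF M P₁).card = 1 := by push_cast at main; omega
      have o2 : (orbF M P₂).card = 1 := by push_cast at main; omega
      have fix : ∀ P : X, (orbF M P).card = 1 → ∀ g : M, g • P = P := by
        intro P hP g
        exact card_le_one.1 hP.le _ (mem_orbF.2 ⟨g, rfl⟩) _ (hself P)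
      exact ⟨P₁, P₂, hne12, fun g => Or.inl ⟨fix _ o1 g, fix _ o2 g⟩, x,
        fun h => hx (h ▸ hS1), fix _ o1 x, fix _ o2 x⟩
    · right
      refine ⟨P₂, cntFix_pos.1 hout2, cntFix_pos.1 (Nat.pos_of_ne_zero hu),
        hu2 P₂ (Nat.pos_of_ne_zero hu), hev1, hev2, b3, d3, ?_⟩
      exact_mod_cast main
  · push Not at hrest
    obtain ⟨P₃, hP₃, hinn3⟩ := hrest
    left
    obtain ⟨Y3, hY3, hm3, hs3⟩ := sum_split (M := M) Y2 hY2 P₃ hP₃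
    have a5 := hs3 (fun P => (inn P : ℤ) + u P) (fun g P => by simp only [inv_inn, inv_u])
    have f1 := hc P₃
    have f2 := hout0 P₃ hP₃
    have f3 := horb P₃
    have hc3 : 2 ≤ c P₃ := by omega
    have ho3 : 2 * (orbF M P₃).card ≤ e := by rw [← f3, mul_comm]; exact Nat.mul_le_mul_left _ hc3
    have hop3 : 0 < (orbF M P₃).card := card_pos.2 ⟨_, hself _⟩
    have f3' : ((orbF M P₃).card : ℤ) * inn P₃ = e - (orbF M P₃).card := by
      rw [f1, f2] at f3
      rw [← f3]; push_cast; ring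
    have hY3nn : 0 ≤ ∑ Q ∈ Y3, ((inn Q : ℤ) + u Q) := sum_nonneg (fun Q _ => by positivity)
    have hu3 : u P₃ = 0 := by
      by_contra hcon
      have h2 := hu2 P₃ (Nat.pos_of_ne_zero hcon)
      have h3 : ((orbF M P₃).card : ℤ) * 2 ≤ (orbF M P₃).card * u P₃ := by
        exact_mod_cast Nat.mul_le_mul_left _ h2
      have h4 : (0 : ℤ) ≤ (orbF M P₂).card * u P₂ := by positivity
      rw [a5, mul_add, f3'] at main
      omega
    have hup2 : u P₂ = 0 := by
      by_contra hcon
      have h2 := hu2 P₂ (Nat.pos_of_ne_zero hcon)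
      have h3 : ((orbF M P₂).card : ℤ) * 2 ≤ (orbF M P₂).card * u P₂ := by
        exact_mod_cast Nat.mul_le_mul_left _ h2
      rw [a5, mul_add, f3', hu3] at main
      push_cast at main
      omega
    have hY3z : ∀ Q ∈ Y3, inn Q = 0 := by
      by_contra hcon
      push Not at hcon
      obtain ⟨P₄, hP₄, hinn4⟩ := hcon
      obtain ⟨Y4, hY4, hm4, hs4⟩ := sum_split (M := M) Y3 hY3 P₄ hP₄
      have a6 := hs4 (fun P => (inn P : ℤ) + u P) (fun g P => by simp only [inv_inn, inv_u])
      have g1 := hc P₄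
      have g2 := hout0 P₄ ((hm3 _).1 hP₄).1
      have g3 := horb P₄
      have hc4 : 2 ≤ c P₄ := by omega
      have ho4 : 2 * (orbF M P₄).card ≤ e := by
        rw [← g3, mul_comm]; exact Nat.mul_le_mul_left _ hc4
      have g3' : ((orbF M P₄).card : ℤ) * inn P₄ = e - (orbF M P₄).card := by
        rw [g1, g2] at g3
        rw [← g3]; push_cast; ring
      have hY4nn : 0 ≤ ∑ Q ∈ Y4, ((inn Q : ℤ) + u Q) := sum_nonneg (fun Q _ => by positivity)
      have h4 : (0 : ℤ) ≤ (orbF M P₄).card * u P₄ := by positivity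
      rw [a5, mul_add, f3', hu3, hup2, a6, mul_add, g3'] at main
      push_cast at main
      omega
    have hR : ∑ Q ∈ Y3, ((inn Q : ℤ) + u Q) = 0 := sum_eq_zero (fun Q hQ => by
      have := hY3z Q hQ
      have := hui Q
      omega)
    rw [a5, mul_add, f3', hu3, hup2, hR] at main
    have hfin : (orbF M P₁).card + (orbF M P₂).card + (orbF M P₃).card = e + 2 := by
      push_cast at main
      omega
    obtain ⟨g2, hg2S, hg2P⟩ := cntFix_pos.1 hout2
    rcases arith_two e _ _ _ (c P₁) (c P₂) (c P₃) b3 d3 f3 hev1 hev2 (h4 P₁ x hP₁ hx)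
      (h4 P₂ g2 hg2P hg2S) hc3 hepos hfin with h | h | h
    · exact orb_two P₁ h (hnontriv _ hc1)
    · exact orb_two P₂ h (hnontriv _ hc2)
    · exact orb_two P₃ h (hnontriv _ hc3)
end Counting

section Pgl
open OnePoint
variable {F : Type} [Field F]

/-- class of the matrix `(a b; c d)` in `PGL₂(F)` -/
noncomputable def pmat (a b c d : F) (h : a * d - b * c ≠ 0) : ProjectiveGL2 F :=
  QuotientGroup.mk (Matrix.GeneralLinearGroup.mkOfDetNeZero !![a, b; c, d] (by rwa [Matrix.det_fin_two_of]))

lemma exists_pmat (g : ProjectiveGL2 F) : ∃ (a b c d : F) (h : a * d - b * c ≠ 0), g = pmat a b c d h := by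
  obtain ⟨A, rfl⟩ := QuotientGroup.mk_surjective g
  refine ⟨A 0 0, A 0 1, A 1 0, A 1 1, ?_, ?_⟩
  · have := A.det_ne_zero
    rwa [Matrix.det_fin_two] at this
  · unfold pmat
    congr 1
    ext i j
    fin_cases i <;> fin_cases j <;> rfl

lemma pmat_eq_iff {a b c d a' b' c' d' : F} {h : a * d - b * c ≠ 0} {h' : a' * d' - b' * c' ≠ 0} :
    pmat a b c d h = pmat a' b' c' d' h' ↔
      ∃ k : F, k ≠ 0 ∧ a' = k * a ∧ b' = k * b ∧ c' = k * c ∧ d' = k * d := by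
  have := @Matrix.ProjGenLinGroup.mk_eq_mk_iff (Fin 2) F _ _ _
    (Matrix.GeneralLinearGroup.mkOfDetNeZero !![a, b; c, d] (by rwa [Matrix.det_fin_two_of]))
    (Matrix.GeneralLinearGroup.mkOfDetNeZero !![a', b'; c', d'] (by rwa [Matrix.det_fin_two_of]))
  refine Iff.trans this ?_
  constructor
  · rintro ⟨u, hu⟩
    refine ⟨u, u.ne_zero, ?_⟩
    have h1 := fun i j => congrArg (fun A : Matrix.GeneralLinearGroup (Fin 2) F => A i j) hu
    have h00 := h1 0 0
    have h01 := h1 0 1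
    have h10 := h1 1 0
    have h11 := h1 1 1
    simp [Matrix.GeneralLinearGroup.mkOfDetNeZero, Matrix.mul_apply, Fin.sum_univ_two] at h00 h01 h10 h11
    refine ⟨?_, ?_, ?_, ?_⟩
    · rw [← h00, mul_comm]
    · rw [← h01, mul_comm]
    · rw [← h10, mul_comm]
    · rw [← h11, mul_comm]
  · rintro ⟨k, hk, rfl, rfl, rfl, rfl⟩
    refine ⟨Units.mk0 k hk, ?_⟩
    ext i j
    fin_cases i <;> fin_cases j <;>
      simp [Matrix.GeneralLinearGroup.mkOfDetNeZero, Matrix.mul_apply, Fin.sum_univ_two, mul_comm]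

lemma pmat_congr {a b c d a' b' c' d' : F} {h : a * d - b * c ≠ 0} (h' : a' * d' - b' * c' ≠ 0)
    (ha : a = a') (hb : b = b') (hc : c = c') (hd : d = d') : pmat a b c d h = pmat a' b' c' d' h' := by
  subst ha hb hc hd; rfl

lemma pmat_one : (1 : ProjectiveGL2 F) = pmat 1 0 0 1 (by simp) := by
  unfold pmat
  rw [← QuotientGroup.mk_one]
  congr 1
  ext i j
  fin_cases i <;> fin_cases j <;> simp [Matrix.GeneralLinearGroup.mkOfDetNeZero]

lemma det_mul_ne {a b c d a' b' c' d' : F} (h : a * d - b * c ≠ 0) (h' : a' * d' - b' * c' ≠ 0) :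
    (a * a' + b * c') * (c * b' + d * d') - (a * b' + b * d') * (c * a' + d * c') ≠ 0 := by
  have := mul_ne_zero h h'
  intro hh
  apply this
  linear_combination hh

lemma pmat_mul {a b c d a' b' c' d' : F} (h : a * d - b * c ≠ 0) (h' : a' * d' - b' * c' ≠ 0) :
    pmat a b c d h * pmat a' b' c' d' h' =
      pmat (a * a' + b * c') (a * b' + b * d') (c * a' + d * c') (c * b' + d * d') (det_mul_ne h h') := by
  unfold pmat
  rw [← QuotientGroup.mk_mul]
  congr 1
  ext i j
  fin_cases i <;> fin_cases j <;>
    simp [Matrix.GeneralLinearGroup.mkOfDetNeZero, Matrix.mul_apply, Fin.sum_univ_two]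

lemma pmat_eq_one_iff {a b c d : F} {h : a * d - b * c ≠ 0} :
    pmat a b c d h = 1 ↔ b = 0 ∧ c = 0 ∧ a = d := by
  rw [eq_comm, pmat_one, pmat_eq_iff]
  constructor
  · rintro ⟨k, hk, rfl, rfl, rfl, rfl⟩; simp
  · rintro ⟨rfl, rfl, rfl⟩
    refine ⟨a, ?_, by simp⟩
    rintro rfl; simp at h

lemma pmat_inv {a b c d : F} (h : a * d - b * c ≠ 0) :
    (pmat a b c d h)⁻¹ = pmat d (-b) (-c) a (by rwa [neg_mul_neg, mul_comm d a]) := by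
  rw [inv_eq_iff_mul_eq_one, pmat_mul, pmat_eq_one_iff]
  refine ⟨by ring, by ring, by ring⟩

lemma mem_socle_iff {a b c d : F} {h : a * d - b * c ≠ 0} :
    pmat a b c d h ∈ socleSL2 F ↔ IsSquare (a * d - b * c) := by
  unfold socleSL2
  constructor
  · rintro ⟨A, hA⟩
    have hA' : pmat (A 0 0) (A 0 1) (A 1 0) (A 1 1) (by
        have := A.det_coe
        rw [Matrix.det_fin_two] at this
        rw [this]; exact one_ne_zero) = pmat a b c d h := by
      rw [← hA]
      unfold pmat
      simp only [MonoidHom.comp_apply, QuotientGroup.mk'_apply]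
      congr 1
      ext i j
      fin_cases i <;> fin_cases j <;> simp [Matrix.GeneralLinearGroup.mkOfDetNeZero]
    obtain ⟨k, hk, rfl, rfl, rfl, rfl⟩ := pmat_eq_iff.1 hA'
    have := A.det_coe
    rw [Matrix.det_fin_two] at this
    exact ⟨k, by linear_combination (k * k) * this⟩
  · rintro ⟨k, hk⟩
    have hk0 : k ≠ 0 := by rintro rfl; simp at hk; exact h hk
    refine ⟨⟨!![k⁻¹ * a, k⁻¹ * b; k⁻¹ * c, k⁻¹ * d], ?_⟩, ?_⟩
    · rw [Matrix.det_fin_two_of]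
      field_simp
      linear_combination hk
    · have h2 : k⁻¹ * a * (k⁻¹ * d) - k⁻¹ * b * (k⁻¹ * c) ≠ 0 := by
        have : k⁻¹ * a * (k⁻¹ * d) - k⁻¹ * b * (k⁻¹ * c) = k⁻¹ * k⁻¹ * (a * d - b * c) := by ring
        rw [this]; exact mul_ne_zero (mul_ne_zero (inv_ne_zero hk0) (inv_ne_zero hk0)) h
      have : pmat (k⁻¹ * a) (k⁻¹ * b) (k⁻¹ * c) (k⁻¹ * d) h2 = pmat a b c d h :=
        pmat_eq_iff.2 ⟨k, hk0, by field_simp, by field_simp, by field_simp, by field_simp⟩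
      rw [← this]
      unfold pmat
      refine congrArg (QuotientGroup.mk (s := Subgroup.center (Matrix.GeneralLinearGroup (Fin 2) F))) ?_
      ext i j
      fin_cases i <;> fin_cases j <;> rfl

section Act
variable (L : Type) [Field L] [DecidableEq L] [Algebra F L]

/-- the permutation representation of `PGL₂(F)` on the projective line over `L`. -/
noncomputable def pglHom : ProjectiveGL2 F →* Equiv.Perm (OnePoint L) :=
  QuotientGroup.lift _ ((MulAction.toPermHom (Matrix.GeneralLinearGroup (Fin 2) L) (OnePoint L)).comp
    (Matrix.GeneralLinearGroup.map (algebraMap F L))) (by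
      intro z hz
      obtain ⟨u, rfl⟩ := (Matrix.GeneralLinearGroup.center_eq_range_scalar (n := Fin 2) (R := F)) ▸ hz
      have hu : algebraMap F L u ≠ 0 := by simp
      ext P
      induction P using OnePoint.rec with
      | infty => simp [smul_infty_eq_ite]
      | coe z => simp [smul_some_eq_ite, hu])

noncomputable instance pglAct : MulAction (ProjectiveGL2 F) (OnePoint L) :=
  MulAction.compHom _ (pglHom L)

variable {L}

lemma pmat_smul_infty {a b c d : F} {h : a * d - b * c ≠ 0} :
    pmat a b c d h • (∞ : OnePoint L) = ∞ ↔ c = 0 := by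
  have : pmat a b c d h • (∞ : OnePoint L) = (Matrix.GeneralLinearGroup.map (algebraMap F L)
    (Matrix.GeneralLinearGroup.mkOfDetNeZero !![a, b; c, d] (by rwa [Matrix.det_fin_two_of]))) • (∞ : OnePoint L) := rfl
  rw [this, smul_infty_eq_self_iff]
  simp [Matrix.GeneralLinearGroup.mkOfDetNeZero]

lemma pmat_smul_coe {a b c d : F} {h : a * d - b * c ≠ 0} (z : L) :
    pmat a b c d h • (z : OnePoint L) = z ↔
      algebraMap F L c * z ^ 2 + (algebraMap F L d - algebraMap F L a) * z - algebraMap F L b = 0 := by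
  have : pmat a b c d h • (z : OnePoint L) = (Matrix.GeneralLinearGroup.map (algebraMap F L)
    (Matrix.GeneralLinearGroup.mkOfDetNeZero !![a, b; c, d] (by rwa [Matrix.det_fin_two_of]))) • (z : OnePoint L) := rfl
  rw [this, ← Matrix.GeneralLinearGroup.fixpointPolynomial_aeval_eq_zero_iff]
  simp [Matrix.GeneralLinearGroup.fixpointPolynomial, Matrix.GeneralLinearGroup.mkOfDetNeZero]

lemma pmat_smul_infty_eq {a b c d : F} {h : a * d - b * c ≠ 0} (hc : c ≠ 0) :
    pmat a b c d h • (∞ : OnePoint L) = ((algebraMap F L (a / c) : L) : OnePoint L) := by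
  have : pmat a b c d h • (∞ : OnePoint L) = (Matrix.GeneralLinearGroup.map (algebraMap F L)
    (Matrix.GeneralLinearGroup.mkOfDetNeZero !![a, b; c, d] (by rwa [Matrix.det_fin_two_of]))) • (∞ : OnePoint L) := rfl
  rw [this, smul_infty_eq_ite]
  simp [Matrix.GeneralLinearGroup.mkOfDetNeZero, hc]
end Act
end Pgl

section FieldFacts

lemma two_ne_of_odd {F : Type} [Field F] [Fintype F] (h : Odd (Fintype.card F)) : ringChar F ≠ 2 := by
  intro h2
  have := FiniteField.even_card_iff_char_two.1 h2
  rw [Nat.odd_iff] at h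
  omega

lemma isSquare_of_pow_eq {F : Type} [Field F] [Fintype F] (r : ℕ) (hr : Odd r)
    (hcard : Fintype.card F = r ^ 2) (a : F) (ha : a ^ r = a) : IsSquare a := by
  by_cases h0 : a = 0
  · rw [h0]; exact IsSquare.zero
  rw [FiniteField.isSquare_iff (two_ne_of_odd (by rw [hcard]; exact hr.pow)) h0]
  obtain ⟨s, rfl⟩ := hr
  have h1 : a ^ (2 * s) = 1 := by
    rw [pow_succ] at ha
    exact mul_right_cancel₀ h0 (by rw [ha, one_mul])
  have : Fintype.card F / 2 = (2 * s) * (s + 1) := by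
    rw [hcard]
    have : (2 * s + 1) ^ 2 = 2 * ((2 * s) * (s + 1)) + 1 := by ring
    omega
  rw [this, pow_mul, h1, one_pow]

lemma natCast_pow_eq {F : Type} [Field F] (p m k : ℕ) [Fact p.Prime] [CharP F p] : (k : F) ^ p ^ m = k := by
  have := map_natCast (iterateFrobenius F p m) k
  rwa [iterateFrobenius_def] at this

lemma mul_nonsquare {F : Type} [Field F] [Fintype F] (hF : ringChar F ≠ 2) (a b : F) (ha : ¬ IsSquare a)
    (hb : ¬ IsSquare b) : IsSquare (a * b) := by
  have ha0 : a ≠ 0 := by rintro rfl; exact ha IsSquare.zero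
  have hb0 : b ≠ 0 := by rintro rfl; exact hb IsSquare.zero
  rw [FiniteField.isSquare_iff hF ha0] at ha
  rw [FiniteField.isSquare_iff hF hb0] at hb
  rw [FiniteField.isSquare_iff hF (mul_ne_zero ha0 hb0), mul_pow,
    (FiniteField.pow_dichotomy hF ha0).resolve_left ha, (FiniteField.pow_dichotomy hF hb0).resolve_left hb]
  norm_num

lemma exists_ext (F : Type) [Field F] [Fintype F] (h : Odd (Fintype.card F)) :
    ∃ (L : Type) (_ : Field L) (_ : Fintype L) (_ : Algebra F L), ∀ a : F, IsSquare (algebraMap F L a) := by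
  obtain ⟨p, hch⟩ := CharP.exists F
  obtain ⟨n, hp, hc⟩ := FiniteField.card F p
  haveI := Fact.mk hp
  letI : Fintype (FiniteField.Extension F p 2) := Fintype.ofFinite _
  refine ⟨FiniteField.Extension F p 2, inferInstance, inferInstance, inferInstance, fun a => ?_⟩
  refine isSquare_of_pow_eq (Fintype.card F) h ?_ _ ?_
  · rw [← Nat.card_eq_fintype_card, ← Nat.card_eq_fintype_card, FiniteField.natCard_extension]
  · rw [← map_pow, FiniteField.pow_card]

end FieldFacts

section FixPts
open OnePoint
variable {F : Type} [Field F]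

/-- nontrivial unipotent class: discriminant of the characteristic polynomial vanishes -/
def IsUni (g : ProjectiveGL2 F) : Prop :=
  g ≠ 1 ∧ ∃ (a b c d : F) (h : a * d - b * c ≠ 0), g = pmat a b c d h ∧ (a - d) ^ 2 + 4 * b * c = 0

lemma isUni_pmat {a b c d : F} {h : a * d - b * c ≠ 0} :
    IsUni (pmat a b c d h) ↔ pmat a b c d h ≠ 1 ∧ (a - d) ^ 2 + 4 * b * c = 0 := by
  constructor
  · rintro ⟨h1, a', b', c', d', h', h2, h3⟩
    refine ⟨h1, ?_⟩
    obtain ⟨k, hk, rfl, rfl, rfl, rfl⟩ := pmat_eq_iff.1 h2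
    have : k ^ 2 * ((a - d) ^ 2 + 4 * b * c) = 0 := by linear_combination h3
    exact (mul_eq_zero.1 this).resolve_left (pow_ne_zero 2 hk)
  · rintro ⟨h1, h2⟩
    exact ⟨h1, a, b, c, d, h, rfl, h2⟩

lemma isUni_conj (g h : ProjectiveGL2 F) (hg : IsUni g) : IsUni (h * g * h⁻¹) := by
  obtain ⟨a, b, c, d, hd, rfl⟩ := exists_pmat g
  obtain ⟨x, y, z, w, hw, rfl⟩ := exists_pmat h
  obtain ⟨h1, h2⟩ := isUni_pmat.1 hg
  have h3 : pmat x y z w hw * pmat a b c d hd * (pmat x y z w hw)⁻¹ ≠ 1 := by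
    intro hh; exact h1 (conj_eq_one_iff.1 hh)
  rw [pmat_inv, pmat_mul, pmat_mul] at h3 ⊢
  rw [isUni_pmat]
  refine ⟨h3, ?_⟩
  linear_combination (x * w - y * z) ^ 2 * h2

lemma isUni_inv (h2 : (2 : F) ≠ 0) (g : ProjectiveGL2 F) (hg : IsUni g) : IsUni g⁻¹ ∧ g⁻¹ ≠ g := by
  obtain ⟨a, b, c, d, hd, rfl⟩ := exists_pmat g
  obtain ⟨h1, h3⟩ := isUni_pmat.1 hg
  constructor
  · have h1' := inv_ne_one.2 h1
    rw [pmat_inv] at h1' ⊢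
    rw [isUni_pmat]
    exact ⟨h1', by linear_combination h3⟩
  · intro h4
    rw [pmat_inv, pmat_eq_iff] at h4
    obtain ⟨k, hk, e1, e2, e3, e4⟩ := h4
    have hk2 : (k ^ 2 - 1) * a = 0 := by linear_combination (-1 : F) * e1 - k * e4
    have hk3 : (k ^ 2 - 1) * d = 0 := by linear_combination (-1 : F) * e4 - k * e1
    have hb : (k + 1) * b = 0 := by linear_combination e2
    have hc : (k + 1) * c = 0 := by linear_combination e3
    by_cases hk1 : k = -1
    · have had : d = -a := by rw [e4, hk1]; ring
      subst had
      have : 4 * (a * -a - b * c) = 0 := by linear_combination (-1 : F) * h3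
      have h4 : (4 : F) ≠ 0 := by
        have : (4 : F) = 2 * 2 := by norm_num
        rw [this]; exact mul_ne_zero h2 h2
      exact hd ((mul_eq_zero.1 this).resolve_left h4)
    · have hk1' : k + 1 ≠ 0 := fun h => hk1 (eq_neg_of_add_eq_zero_left h)
      have hb0 := (mul_eq_zero.1 hb).resolve_left hk1'
      have hc0 := (mul_eq_zero.1 hc).resolve_left hk1'
      apply h1
      rw [pmat_eq_one_iff]
      refine ⟨hb0, hc0, ?_⟩
      rw [hb0, hc0] at h3
      have : (a - d) ^ 2 = 0 := by linear_combination h3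
      exact sub_eq_zero.1 (pow_eq_zero_iff (two_ne_zero)|>.1 this)

lemma disc_zero_square (h2 : (2 : F) ≠ 0) {a b c d : F} (h : (a - d) ^ 2 + 4 * b * c = 0) :
    IsSquare (a * d - b * c) := by
  refine ⟨(a + d) / 2, ?_⟩
  field_simp
  linear_combination (-1 : F) * h

lemma isUni_socle (h2 : (2 : F) ≠ 0) (g : ProjectiveGL2 F) (hg : IsUni g) : g ∈ socleSL2 F := by
  obtain ⟨a, b, c, d, hd, rfl⟩ := exists_pmat g
  exact mem_socle_iff.2 (disc_zero_square h2 (isUni_pmat.1 hg).2)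

variable {L : Type} [Field L] [DecidableEq L] [Algebra F L]

lemma fix_two (h2 : (2 : F) ≠ 0) (hsq : ∀ a : F, IsSquare (algebraMap F L a)) {a b c d : F}
    {h : a * d - b * c ≠ 0} (hD : (a - d) ^ 2 + 4 * b * c ≠ 0) :
    ∃ P P' : OnePoint L, P ≠ P' ∧ ∀ Q : OnePoint L, pmat a b c d h • Q = Q ↔ Q = P ∨ Q = P' := by
  have h2L : (2 : L) ≠ 0 := by
    have := (map_ne_zero (algebraMap F L)).2 h2
    rwa [map_ofNat] at this
  by_cases hc : c = 0
  · subst hc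
    have had : algebraMap F L d - algebraMap F L a ≠ 0 := by
      rw [← map_sub]
      refine (map_ne_zero _).2 ?_
      intro h0
      apply hD
      linear_combination (d - a) * h0
    refine ⟨∞, ((algebraMap F L b / (algebraMap F L d - algebraMap F L a) : L) : OnePoint L),
      OnePoint.infty_ne_coe _, fun Q => ?_⟩
    induction Q using OnePoint.rec with
    | infty => simp [pmat_smul_infty]
    | coe z =>
      rw [pmat_smul_coe]
      simp only [map_zero, zero_mul, zero_add, OnePoint.coe_ne_infty, false_or, OnePoint.coe_eq_coe]
      rw [eq_div_iff had, sub_eq_zero, mul_comm]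
  · have hcL : algebraMap F L c ≠ 0 := (map_ne_zero _).2 hc
    obtain ⟨s, hs⟩ := hsq ((a - d) ^ 2 + 4 * b * c)
    have hs0 : s ≠ 0 := by
      rintro rfl
      rw [mul_zero] at hs
      exact hD ((map_eq_zero _).1 hs)
    simp only [map_add, map_mul, map_pow, map_sub, map_ofNat] at hs
    set a' := algebraMap F L a
    set b' := algebraMap F L b
    set c' := algebraMap F L c
    set d' := algebraMap F L d
    refine ⟨(((a' - d' + s) / (2 * c') : L) : OnePoint L), (((a' - d' - s) / (2 * c') : L) : OnePoint L), ?_,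
      fun Q => ?_⟩
    · rw [Ne, OnePoint.coe_eq_coe]
      intro he
      field_simp at he
      have : 2 * s = 0 := by linear_combination he
      exact hs0 ((mul_eq_zero.1 this).resolve_left h2L)
    · induction Q using OnePoint.rec with
      | infty => simp [pmat_smul_infty, hc]
      | coe z =>
        rw [pmat_smul_coe]
        simp only [OnePoint.coe_eq_coe]
        rw [eq_div_iff (mul_ne_zero h2L hcL), eq_div_iff (mul_ne_zero h2L hcL)]
        have key : 4 * c' * (c' * z ^ 2 + (d' - a') * z - b') =
          (z * (2 * c') - (a' - d' + s)) * (z * (2 * c') - (a' - d' - s)) := by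
          linear_combination (-1 : L) * hs
        have h4 : 4 * c' ≠ 0 := by
          have : (4 : L) = 2 * 2 := by norm_num
          rw [this]; exact mul_ne_zero (mul_ne_zero h2L h2L) hcL
        constructor
        · intro h0
          rw [h0, mul_zero] at key
          rcases mul_eq_zero.1 key.symm with h | h
          · left; exact sub_eq_zero.1 h
          · right; exact sub_eq_zero.1 h
        · intro h0
          have : 4 * c' * (c' * z ^ 2 + (d' - a') * z - b') = 0 := by
            rw [key]
            rcases h0 with h | h
            · rw [h]; ring
            · rw [h]; ring
          exact (mul_eq_zero.1 this).resolve_left h4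

lemma fix_one (h2 : (2 : F) ≠ 0) {a b c d : F}
    {h : a * d - b * c ≠ 0} (hD : (a - d) ^ 2 + 4 * b * c = 0) (hne : pmat a b c d h ≠ 1) :
    ∃ P : OnePoint L, (∀ Q : OnePoint L, pmat a b c d h • Q = Q ↔ Q = P) ∧
      (P = ∞ ∨ ∃ z : F, P = ((algebraMap F L z : L) : OnePoint L)) := by
  have h2L : (2 : L) ≠ 0 := by
    have := (map_ne_zero (algebraMap F L)).2 h2
    rwa [map_ofNat] at this
  by_cases hc : c = 0
  · subst hc
    have had : a = d := by
      have : (a - d) ^ 2 = 0 := by linear_combination hD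
      exact sub_eq_zero.1 (pow_eq_zero_iff (two_ne_zero)|>.1 this)
    subst had
    have hb : b ≠ 0 := by
      rintro rfl
      exact hne (pmat_eq_one_iff.2 ⟨rfl, rfl, rfl⟩)
    refine ⟨∞, fun Q => ?_, Or.inl rfl⟩
    induction Q using OnePoint.rec with
    | infty => simp [pmat_smul_infty]
    | coe z =>
      rw [pmat_smul_coe]
      simp [hb]
  · have hcL : algebraMap F L c ≠ 0 := (map_ne_zero _).2 hc
    refine ⟨((algebraMap F L ((a - d) / (2 * c)) : L) : OnePoint L), fun Q => ?_, Or.inr ⟨_, rfl⟩⟩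
    induction Q using OnePoint.rec with
    | infty => simp [pmat_smul_infty, hc]
    | coe z =>
      rw [pmat_smul_coe]
      simp only [OnePoint.coe_eq_coe]
      have hs := congrArg (algebraMap F L) hD
      simp only [map_add, map_mul, map_pow, map_sub, map_ofNat, map_zero, map_div₀] at hs ⊢
      set a' := algebraMap F L a
      set b' := algebraMap F L b
      set c' := algebraMap F L c
      set d' := algebraMap F L d
      rw [eq_div_iff (mul_ne_zero h2L hcL)]
      have key : 4 * c' * (c' * z ^ 2 + (d' - a') * z - b') = (z * (2 * c') - (a' - d')) ^ 2 := by
        linear_combination (-1 : L) * hs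
      have h4 : 4 * c' ≠ 0 := by
        have : (4 : L) = 2 * 2 := by norm_num
        rw [this]; exact mul_ne_zero (mul_ne_zero h2L h2L) hcL
      constructor
      · intro h0
        rw [h0, mul_zero] at key
        exact sub_eq_zero.1 (pow_eq_zero_iff (two_ne_zero)|>.1 key.symm)
      · intro h0
        have : 4 * c' * (c' * z ^ 2 + (d' - a') * z - b') = 0 := by
          rw [key, h0]; ring
        exact (mul_eq_zero.1 this).resolve_left h4

/-- elements of order two are traceless -/
lemma involution_form {t : ProjectiveGL2 F} (ht : t ≠ 1) (htt : t * t = 1) :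
    ∃ (a b c : F) (h : a * (-a) - b * c ≠ 0), t = pmat a b c (-a) h := by
  obtain ⟨a, b, c, d, h, rfl⟩ := exists_pmat t
  rw [pmat_mul, pmat_eq_one_iff] at htt
  obtain ⟨e1, e2, e3⟩ := htt
  have hd : d = -a := by
    by_contra hne
    have hs : a + d ≠ 0 := fun h0 => hne (eq_neg_of_add_eq_zero_right h0)
    apply ht
    rw [pmat_eq_one_iff]
    refine ⟨(mul_eq_zero.1 (?_ : (a + d) * b = 0)).resolve_left hs,
      (mul_eq_zero.1 (?_ : (a + d) * c = 0)).resolve_left hs,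
      sub_eq_zero.1 ((mul_eq_zero.1 (?_ : (a + d) * (a - d) = 0)).resolve_left hs)⟩
    · linear_combination e1
    · linear_combination e2
    · linear_combination e3
  subst hd
  exact ⟨a, b, c, h, rfl⟩

/-- an outer traceless involution has no rational fixed points -/
lemma outer_no_rational (hm1 : IsSquare (-1 : F)) {a b c : F} {h : a * (-a) - b * c ≠ 0}
    (ho : pmat a b c (-a) h ∉ socleSL2 F) (P : OnePoint L) (hP : pmat a b c (-a) h • P = P) :
    P ≠ ∞ ∧ ∀ z : F, P ≠ ((algebraMap F L z : L) : OnePoint L) := by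
  rw [mem_socle_iff] at ho
  obtain ⟨i, hi⟩ := hm1
  constructor
  · rintro rfl
    rw [pmat_smul_infty] at hP
    subst hP
    exact ho ⟨i * a, by linear_combination a * a * hi⟩
  · rintro z rfl
    rw [pmat_smul_coe] at hP
    simp only [← map_sub, ← map_mul, ← map_add, ← map_pow] at hP
    rw [map_eq_zero] at hP
    refine ho ⟨i * (c * z - a), ?_⟩
    linear_combination (c * z - a) * (c * z - a) * hi + c * hP
end FixPts

section Outcome
open OnePoint
variable {F : Type} [Field F]

lemma comm_inv_cases {a b c a' b' c' : F} {h : a * (-a) - b * c ≠ 0} {h' : a' * (-a') - b' * c' ≠ 0}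
    (hcm : pmat a b c (-a) h * pmat a' b' c' (-a') h' = pmat a' b' c' (-a') h' * pmat a b c (-a) h) :
    pmat a b c (-a) h = pmat a' b' c' (-a') h' ∨ 2 * a * a' + b' * c + b * c' = 0 := by
  rw [pmat_mul, pmat_mul, pmat_eq_iff] at hcm
  obtain ⟨k, hk, e1, e2, e3, e4⟩ := hcm
  by_cases hk1 : k = -1
  · right; subst hk1; linear_combination e1
  · left
    have hk1' : k + 1 ≠ 0 := fun h => hk1 (eq_neg_of_add_eq_zero_left h)
    have m1 : a * b' = b * a' := by
      apply mul_left_cancel₀ hk1'; linear_combination -e2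
    have m2 : a * c' = c * a' := by
      apply mul_left_cancel₀ hk1'; linear_combination e3
    have m3 : b * c' = c * b' := by
      apply mul_left_cancel₀ hk1'; linear_combination (e4 - e1)/1
    rw [pmat_eq_iff]
    by_cases ha : a = 0
    · subst ha
      have hb : b ≠ 0 := by rintro rfl; simp at h
      have hc : c ≠ 0 := by rintro rfl; simp at h
      have ha' : a' = 0 := by
        have : b * a' = 0 := by linear_combination -m1
        exact (mul_eq_zero.1 this).resolve_left hb
      subst ha'
      have hb' : b' ≠ 0 := by rintro rfl; simp at h'
      refine ⟨b' / b, div_ne_zero hb' hb, by simp, by field_simp, ?_, by simp⟩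
      field_simp
      linear_combination m3
    · have ha' : a' ≠ 0 := by
        rintro rfl
        have hb' : b' = 0 := by
          have : a * b' = 0 := by linear_combination m1
          exact (mul_eq_zero.1 this).resolve_left ha
        rw [hb'] at h'; simp at h'
      refine ⟨a' / a, div_ne_zero ha' ha, by field_simp, ?_, ?_, by field_simp⟩
      · field_simp; linear_combination m1
      · field_simp; linear_combination m2

variable {L : Type} [Field L] [DecidableEq L] [Algebra F L]

lemma comm_inv_fix (h2 : (2 : F) ≠ 0) {s g : ProjectiveGL2 F} (hs : s ≠ 1) (hs2 : s * s = 1) (hg : g ≠ 1)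
    (hg2 : g * g = 1) (hc : g * s = s * g) (P : OnePoint L) (hP : g • P = P) (hP' : s • P = P) : g = s := by
  obtain ⟨a, b, c, h, rfl⟩ := involution_form hg hg2
  obtain ⟨a', b', c', h', rfl⟩ := involution_form hs hs2
  refine (comm_inv_cases hc).resolve_right fun h0 => ?_
  induction P using OnePoint.rec with
  | infty =>
    rw [pmat_smul_infty] at hP hP'
    subst hP hP'
    have : 2 * (a * a') = 0 := by linear_combination h0
    rcases mul_eq_zero.1 ((mul_eq_zero.1 this).resolve_left h2) with ha | ha
    · subst ha; simp at h
    · subst ha; simp at h'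
  | coe z =>
    rw [pmat_smul_coe] at hP hP'
    have h2L : (2 : L) ≠ 0 := by
      have := (map_ne_zero (algebraMap F L)).2 h2
      rwa [map_ofNat] at this
    have h0L := congrArg (algebraMap F L) h0
    have hL := (map_ne_zero (algebraMap F L)).2 h
    have hL' := (map_ne_zero (algebraMap F L)).2 h'
    simp only [map_add, map_mul, map_pow, map_sub, map_ofNat, map_zero, map_neg] at h0L hP hP' hL hL'
    set A := algebraMap F L a
    set B := algebraMap F L b
    set C := algebraMap F L c
    set A' := algebraMap F L a'
    set B' := algebraMap F L b'
    set C' := algebraMap F L c'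
    have key : 2 * ((C * z - A) * (C' * z - A')) = 0 := by
      linear_combination h0L + C' * hP + C * hP'
    rcases mul_eq_zero.1 ((mul_eq_zero.1 key).resolve_left h2L) with e | e
    · apply hL
      linear_combination C * hP - (C * z - A) * e
    · apply hL'
      linear_combination C' * hP' - (C' * z - A') * e

lemma prop_of_fix {a b c d a' b' c' d' : F} {h : a * d - b * c ≠ 0} {h' : a' * d' - b' * c' ≠ 0}
    (hn : pmat a b c d h ≠ 1) (hn' : pmat a' b' c' d' h' ≠ 1) {P P' : OnePoint L} (hPP : P ≠ P')
    (e1 : pmat a b c d h • P = P) (e2 : pmat a b c d h • P' = P')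
    (e1' : pmat a' b' c' d' h' • P = P) (e2' : pmat a' b' c' d' h' • P' = P') :
    ∃ k : F, k ≠ 0 ∧ a' - d' = k * (a - d) ∧ b' = k * b ∧ c' = k * c := by
  have inf : ∀ z : L, pmat a b c d h • (∞ : OnePoint L) = ∞ → pmat a b c d h • (z : OnePoint L) = z →
      pmat a' b' c' d' h' • (∞ : OnePoint L) = ∞ → pmat a' b' c' d' h' • (z : OnePoint L) = z →
      ∃ k : F, k ≠ 0 ∧ a' - d' = k * (a - d) ∧ b' = k * b ∧ c' = k * c := by
    intro z f1 f2 f1' f2'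
    rw [pmat_smul_infty] at f1 f1'
    rw [pmat_smul_coe] at f2 f2'
    subst f1 f1'
    have had : a - d ≠ 0 := by
      intro h0
      have : a = d := sub_eq_zero.1 h0
      subst this
      apply hn
      rw [pmat_eq_one_iff]
      refine ⟨?_, rfl, rfl⟩
      simpa using f2
    have had' : a' - d' ≠ 0 := by
      intro h0
      have : a' = d' := sub_eq_zero.1 h0
      subst this
      apply hn'
      rw [pmat_eq_one_iff]
      refine ⟨?_, rfl, rfl⟩
      simpa using f2'
    refine ⟨(a' - d') / (a - d), div_ne_zero had' had, by field_simp, ?_, by simp⟩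
    have : b' * (a - d) = (a' - d') * b := by
      apply (algebraMap F L).injective
      simp only [map_mul, map_sub, map_zero] at f2 f2' ⊢
      linear_combination (algebraMap F L a' - algebraMap F L d') * f2 -
        (algebraMap F L a - algebraMap F L d) * f2'
    field_simp
    exact this
  have cne : ∀ {a b c d : F} {h : a * d - b * c ≠ 0}, pmat a b c d h ≠ 1 → ∀ z w : L, z ≠ w →
      pmat a b c d h • (z : OnePoint L) = z → pmat a b c d h • (w : OnePoint L) = w →
      c ≠ 0 ∧ algebraMap F L a - algebraMap F L d = algebraMap F L c * (z + w) ∧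
        algebraMap F L b = - algebraMap F L c * (z * w) := by
    intro a b c d h hn z w hzw f1 f2
    rw [pmat_smul_coe] at f1 f2
    have k1 : algebraMap F L a - algebraMap F L d = algebraMap F L c * (z + w) := by
      apply mul_left_cancel₀ (sub_ne_zero.2 hzw)
      linear_combination f2 - f1
    have k2 : algebraMap F L b = - algebraMap F L c * (z * w) := by
      linear_combination -z * k1 - f1
    refine ⟨?_, k1, k2⟩
    rintro rfl
    apply hn
    rw [pmat_eq_one_iff]
    simp only [map_zero, zero_mul, neg_zero] at k1 k2
    exact ⟨(map_eq_zero _).1 k2, rfl, (algebraMap F L).injective (sub_eq_zero.1 k1)⟩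
  induction P using OnePoint.rec with
  | infty =>
    induction P' using OnePoint.rec with
    | infty => exact absurd rfl hPP
    | coe z => exact inf z e1 e2 e1' e2'
  | coe z =>
    induction P' using OnePoint.rec with
    | infty => exact inf z e2 e1 e2' e1'
    | coe w =>
      have hzw : z ≠ w := by rintro rfl; exact hPP rfl
      obtain ⟨c0, k1, k2⟩ := cne hn z w hzw e1 e2
      obtain ⟨c0', k1', k2'⟩ := cne hn' z w hzw e1' e2'
      refine ⟨c' / c, div_ne_zero c0' c0, ?_, ?_, by field_simp⟩
      · have : (a' - d') * c = c' * (a - d) := by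
          apply (algebraMap F L).injective
          simp only [map_mul, map_sub]
          rw [k1, k1']; ring
        field_simp; linear_combination this
      · have : b' * c = c' * b := by
          apply (algebraMap F L).injective
          simp only [map_mul]
          rw [k2, k2']; ring
        field_simp; linear_combination this

lemma outcome_one (h2 : (2 : F) ≠ 0) (M : Subgroup (ProjectiveGL2 F)) {P P' : OnePoint L} (hPP : P ≠ P')
    (hM : ∀ g ∈ M, (g • P = P ∧ g • P' = P') ∨ (g • P = P' ∧ g • P' = P))
    (g : ProjectiveGL2 F) (hg1 : g ≠ 1) (hgP : g • P = P) (hgP' : g • P' = P') :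
    ∃ t : ProjectiveGL2 F, t ≠ 1 ∧ t * t = 1 ∧ ∀ h ∈ M, h * t = t * h := by
  obtain ⟨a, b, c, d, hd, rfl⟩ := exists_pmat g
  have hD : (a - d) ^ 2 + 4 * b * c ≠ 0 := by
    intro h0
    obtain ⟨Q, hQ, -⟩ := fix_one (L := L) h2 h0 hg1
    exact hPP (((hQ P).1 hgP).trans ((hQ P').1 hgP').symm)
  have hT : (a - d) * (d - a) - (2 * b) * (2 * c) ≠ 0 := by
    intro h0; apply hD; linear_combination -h0
  refine ⟨pmat (a - d) (2 * b) (2 * c) (d - a) hT, ?_, ?_, ?_⟩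
  · rw [Ne, pmat_eq_one_iff]
    rintro ⟨e1, e2, e3⟩
    apply hD
    have : 2 * (a - d) = 0 := by linear_combination e3
    have := (mul_eq_zero.1 this).resolve_left h2
    rw [this]
    linear_combination 2 * c * e1
  · rw [pmat_mul, pmat_eq_one_iff]
    refine ⟨by ring, by ring, by ring⟩
  · intro h hh
    have hc1 : h * pmat a b c d hd * h⁻¹ ≠ 1 := fun h0 => hg1 (conj_eq_one_iff.1 h0)
    have hP : (h * pmat a b c d hd * h⁻¹) • P = P ∧ (h * pmat a b c d hd * h⁻¹) • P' = P' := by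
      rcases hM h⁻¹ (M.inv_mem hh) with ⟨f1, f2⟩ | ⟨f1, f2⟩
      · constructor
        · rw [mul_smul, mul_smul, f1, hgP, ← f1, smul_inv_smul, f1]
        · rw [mul_smul, mul_smul, f2, hgP', ← f2, smul_inv_smul, f2]
      · constructor
        · rw [mul_smul, mul_smul, f1, hgP', ← f1, smul_inv_smul]
        · rw [mul_smul, mul_smul, f2, hgP, ← f2, smul_inv_smul]
    obtain ⟨x, y, z, w, hw, rfl⟩ := exists_pmat h
    rw [← mul_inv_eq_iff_eq_mul]
    rw [pmat_inv, pmat_mul, pmat_mul] at hc1 hP ⊢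
    obtain ⟨k, hk, r1, r2, r3⟩ := prop_of_fix hg1 hc1 hPP hgP hgP' hP.1 hP.2
    symm
    rw [pmat_eq_iff]
    refine ⟨k, hk, ?_, ?_, ?_, ?_⟩
    · linear_combination r1
    · linear_combination 2 * r2
    · linear_combination 2 * r3
    · linear_combination -r1

lemma four_stab (h2 : (2 : F) ≠ 0) (h2s : IsSquare (2 : F)) (K : Subgroup (ProjectiveGL2 F)) (hK : Nat.card K = 4)
    (P : OnePoint L) (hP : ∀ g ∈ K, g • P = P) (hS2 : ∀ g h : ProjectiveGL2 F, g ∉ socleSL2 F → h ∉ socleSL2 F →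
      g * h ∈ socleSL2 F) (g : ProjectiveGL2 F) (hg : g ∈ K) (hgS : g ∉ socleSL2 F) : False := by
  have hpow : ∀ k ∈ K, (k * k) * (k * k) = 1 := by
    intro k hk
    have := pow_card_eq_one' (x := (⟨k, hk⟩ : K))
    rw [hK] at this
    have := congrArg (Subtype.val) this
    simp only [Subgroup.coe_pow, Subgroup.coe_one] at this
    rw [← this]; simp only [pow_succ, pow_zero, one_mul, mul_assoc]
  have hcomm : ∀ k ∈ K, ∀ l ∈ K, k * l = l * k := by
    intro k hk l hl
    haveI : Fact (Nat.Prime 2) := ⟨Nat.prime_two⟩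
    have := IsPGroup.commutative_of_card_eq_prime_sq (p := 2) (G := K) (by rw [hK]; norm_num) ⟨k, hk⟩ ⟨l, hl⟩
    exact congrArg Subtype.val this
  have hg1 : g ≠ 1 := by rintro rfl; exact hgS (one_mem _)
  by_cases hgg : g * g = 1
  · have : ∃ k ∈ K, k ≠ 1 ∧ k ≠ g := by
      by_contra hcon
      push Not at hcon
      have : (K : Set (ProjectiveGL2 F)) ⊆ {1, g} := by
        intro k hk
        by_cases hk1 : k = 1
        · left; exact hk1
        · right; exact hcon k hk hk1
      have := Set.ncard_le_ncard this (Set.toFinite _)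
      have h3 : (K : Set (ProjectiveGL2 F)).ncard = 4 := hK
      have := Set.ncard_insert_le 1 {g}
      rw [Set.ncard_singleton] at this
      omega
    obtain ⟨k, hk, hk1, hkg⟩ := this
    have : ∃ s ∈ K, s ≠ 1 ∧ s ∈ socleSL2 F := by
      by_cases hkS : k ∈ socleSL2 F
      · exact ⟨k, hk, hk1, hkS⟩
      · refine ⟨g * k, K.mul_mem hg hk, ?_, hS2 _ _ hgS hkS⟩
        intro h0
        apply hkg
        exact mul_left_cancel (h0.trans hgg.symm)
    obtain ⟨s, hs, hs1, hsS⟩ := this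
    have hss : s * s = 1 := by
      by_contra hne
      have hord : orderOf s = 2 ^ (1 + 1) := by
        haveI : Fact (Nat.Prime 2) := ⟨Nat.prime_two⟩
        apply orderOf_eq_prime_pow
        · rw [pow_one, pow_two]; exact hne
        · rw [← hpow s hs]; norm_num only; simp only [pow_succ, pow_zero, one_mul, mul_assoc]
      have hle : Subgroup.zpowers s ≤ K := by rwa [Subgroup.zpowers_le]
      have heq : Subgroup.zpowers s = K := by
        haveI : Finite K := Nat.finite_of_card_ne_zero (by rw [hK]; norm_num)
        apply Subgroup.eq_of_le_of_card_ge hle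
        rw [hK, Nat.card_zpowers, hord]; norm_num
      have : K ≤ socleSL2 F := by
        rw [← heq, Subgroup.zpowers_le]; exact hsS
      exact hgS (this hg)
    have := comm_inv_fix h2 hs1 hss hg1 hgg (hcomm _ hg _ hs) P (hP _ hg) (hP _ hs)
    exact hgS (this ▸ hsS)
  · obtain ⟨a, b, c, d, hd, rfl⟩ := exists_pmat g
    obtain ⟨x, y, z, hw, he⟩ := involution_form hgg (hpow _ hg)
    rw [pmat_mul, pmat_eq_iff] at he
    obtain ⟨k, hk, r1, -, -, r4⟩ := he
    have : a * a + b * c + (c * b + d * d) = 0 := by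
      apply mul_left_cancel₀ hk
      linear_combination -r1 - r4
    obtain ⟨m, hm⟩ := h2s
    have hm0 : m ≠ 0 := by rintro rfl; simp at hm; exact h2 hm
    apply hgS
    rw [mem_socle_iff]
    refine ⟨(a + d) / m, ?_⟩
    field_simp
    linear_combination -this - (a * d - b * c) * hm
end Outcome

section Borel
open OnePoint
variable {F : Type} [Field F]

/-- the affine map `z ↦ k z + b` -/
noncomputable def aff (k : Fˣ) (b : F) : ProjectiveGL2 F := pmat (k : F) b 0 1 (by simp)

lemma aff_mul (k l : Fˣ) (b c : F) : aff k b * aff l c = aff (k * l) (k * c + b) := by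
  unfold aff
  rw [pmat_mul]
  apply pmat_congr <;> simp

lemma aff_one : aff 1 0 = (1 : ProjectiveGL2 F) := by
  unfold aff
  rw [pmat_eq_one_iff]; simp

lemma aff_inj {k l : Fˣ} {b c : F} (h : aff k b = aff l c) : k = l ∧ b = c := by
  unfold aff at h
  rw [pmat_eq_iff] at h
  obtain ⟨m, -, e1, e2, -, e4⟩ := h
  have : m = 1 := by simpa using e4.symm
  subst this
  simp only [one_mul] at e1 e2
  exact ⟨Units.ext e1.symm, e2.symm⟩

lemma aff_inv (k : Fˣ) (b : F) : (aff k b)⁻¹ = aff k⁻¹ (-(k⁻¹ : Fˣ) * b) := by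
  rw [inv_eq_iff_mul_eq_one, aff_mul, ← aff_one]
  congr 1
  · simp
  · simp

lemma aff_socle (k : Fˣ) (b : F) : aff k b ∈ socleSL2 F ↔ IsSquare (k : F) := by
  unfold aff
  rw [mem_socle_iff]; simp

lemma aff_uni (k : Fˣ) (b : F) : IsUni (aff k b) ↔ k = 1 ∧ b ≠ 0 := by
  unfold aff
  rw [isUni_pmat, Ne, pmat_eq_one_iff]
  constructor
  · rintro ⟨h1, h2⟩
    have : ((k : F) - 1) ^ 2 = 0 := by linear_combination h2
    have hk : (k : F) = 1 := sub_eq_zero.1 (pow_eq_zero_iff (two_ne_zero)|>.1 this)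
    refine ⟨Units.ext hk, fun hb => h1 ⟨hb, rfl, hk⟩⟩
  · rintro ⟨rfl, hb⟩
    refine ⟨fun h => hb h.1, by simp⟩

variable {L : Type} [Field L] [DecidableEq L] [Algebra F L]

lemma fix_infty_iff (g : ProjectiveGL2 F) : g • (∞ : OnePoint L) = ∞ ↔ ∃ k b, g = aff k b := by
  constructor
  · intro h
    obtain ⟨a, b, c, d, hd, rfl⟩ := exists_pmat g
    rw [pmat_smul_infty] at h
    subst h
    have ha : a ≠ 0 := by rintro rfl; simp at hd
    have hd' : d ≠ 0 := by rintro rfl; simp at hd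
    refine ⟨Units.mk0 (a / d) (div_ne_zero ha hd'), b / d, ?_⟩
    unfold aff
    rw [pmat_eq_iff]
    refine ⟨d⁻¹, inv_ne_zero hd', ?_, ?_, by simp, by field_simp⟩
    · simp [div_eq_inv_mul]
    · simp [div_eq_inv_mul]
  · rintro ⟨k, b, rfl⟩
    unfold aff
    rw [pmat_smul_infty]

lemma subfield_top {p n : ℕ} (hp : Nat.Prime p) (hodd : Odd p) [Fintype F]
    (hF : Fintype.card F = p ^ 2 ^ n) (E : Subfield F) (e : F) (he : e ∈ E) (hns : ¬ IsSquare e) : E = ⊤ := by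
  classical
  letI : Fintype E := Fintype.ofFinite _
  have h1 : Fintype.card F = Fintype.card E ^ Module.finrank E F := Module.card_eq_pow_finrank
  set r := Module.finrank E F with hr
  have hrpos : 0 < r := Module.finrank_pos
  have hdv : Fintype.card E ∣ p ^ 2 ^ n := by
    rw [← hF, h1]; exact dvd_pow_self _ hrpos.ne'
  obtain ⟨d, -, hd⟩ := (Nat.dvd_prime_pow hp).1 hdv
  have hEodd : Odd (Fintype.card E) := by rw [hd]; exact hodd.pow
  have h2 : d * r = 2 ^ n := by
    rw [hd, ← pow_mul, hF] at h1
    exact (Nat.pow_right_injective hp.two_le h1).symm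
  obtain ⟨j, -, hj⟩ := (Nat.dvd_prime_pow Nat.prime_two).1 (Dvd.intro_left d h2)
  rcases j with _ | j
  · rw [pow_zero] at hj
    rw [hj, pow_one] at h1
    apply SetLike.coe_injective
    rw [Subfield.coe_top]
    apply Set.eq_of_subset_of_card_le (Set.subset_univ _)
    rw [Fintype.card_setUniv, h1]
    exact le_of_eq (Fintype.card_congr (Equiv.refl _))
  · exfalso
    apply hns
    have hpow : ∀ m : ℕ, e ^ Fintype.card E ^ m = e := by
      intro m
      have := FiniteField.pow_card_pow (K := E) m ⟨e, he⟩
      exact congrArg Subtype.val this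
    refine isSquare_of_pow_eq (Fintype.card E ^ 2 ^ j) hEodd.pow ?_ e (hpow _)
    rw [h1, hj, ← pow_mul, pow_succ]

lemma borel_top {p n : ℕ} (hp : Nat.Prime p) (hodd : Odd p) [Fintype F]
    (hF : Fintype.card F = p ^ 2 ^ n) (M : Subgroup (ProjectiveGL2 F)) (o1 m1 N : ℕ) (hN : 2 ≤ N)
    (h1 : o1 * m1 = N * Nat.card {g : ProjectiveGL2 F // g ∈ M ∧ g • (∞ : OnePoint L) = ∞})
    (h2 : o1 + N = 2 + N * Nat.card {g : ProjectiveGL2 F // g ∈ M ∧ IsUni g ∧ g • (∞ : OnePoint L) = ∞})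
    (hu : 2 ≤ Nat.card {g : ProjectiveGL2 F // g ∈ M ∧ IsUni g ∧ g • (∞ : OnePoint L) = ∞})
    (hm : Even m1) (hev : Even (Nat.card {g : ProjectiveGL2 F // g ∈ M ∧ g • (∞ : OnePoint L) = ∞}))
    (hout : ∃ g ∈ M, g ∉ socleSL2 F ∧ g • (∞ : OnePoint L) = ∞)
    (hmove : ∃ g ∈ M, g • (∞ : OnePoint L) ≠ ∞) : M = ⊤ := by
  classical
  let V : AddSubgroup F :=
    { carrier := {v | aff 1 v ∈ M}
      zero_mem' := by
        change aff 1 0 ∈ M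
        rw [aff_one]; exact one_mem _
      add_mem' := by
        intro u v hu hv
        have := M.mul_mem (show aff 1 v ∈ M from hv) (show aff 1 u ∈ M from hu)
        rw [aff_mul] at this
        simpa using this
      neg_mem' := by
        intro v hv
        have := M.inv_mem (show aff 1 v ∈ M from hv)
        rw [aff_inv] at this
        simpa using this }
  have hV : ∀ v, v ∈ V ↔ aff 1 v ∈ M := fun v => Iff.rfl
  let K : Subgroup Fˣ :=
    { carrier := {k | ∃ b, aff k b ∈ M}
      one_mem' := ⟨0, by rw [aff_one]; exact one_mem _⟩
      mul_mem' := by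
        rintro k l ⟨b, hb⟩ ⟨c, hc⟩
        have := M.mul_mem hb hc
        rw [aff_mul] at this
        exact ⟨_, this⟩
      inv_mem' := by
        rintro k ⟨b, hb⟩
        have := M.inv_mem hb
        rw [aff_inv] at this
        exact ⟨_, this⟩ }
  have hK : ∀ k, k ∈ K ↔ ∃ b, aff k b ∈ M := fun k => Iff.rfl
  have hKV : ∀ k ∈ K, ∀ v ∈ V, (k : F) * v ∈ V := by
    rintro k ⟨b, hb⟩ v hv
    rw [hV] at hv ⊢
    have := M.mul_mem (M.mul_mem hb hv) (M.inv_mem hb)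
    rw [aff_inv, aff_mul, aff_mul] at this
    convert this using 2
    · simp
    · simp
  -- counting
  have cU : Nat.card {g : ProjectiveGL2 F // g ∈ M ∧ IsUni g ∧ g • (∞ : OnePoint L) = ∞} + 1 = Nat.card V := by
    have e : {g : ProjectiveGL2 F // g ∈ M ∧ IsUni g ∧ g • (∞ : OnePoint L) = ∞} ≃ {v : V // v ≠ 0} := by
      symm
      refine Equiv.ofBijective (fun v => ⟨aff 1 v.1.1, v.1.2, (aff_uni _ _).2 ⟨rfl, fun h0 => v.2 (Subtype.ext h0)⟩,
        (fix_infty_iff _).2 ⟨_, _, rfl⟩⟩) ⟨?_, ?_⟩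
      · intro v w hvw
        have := (aff_inj (congrArg Subtype.val hvw)).2
        exact Subtype.ext (Subtype.ext this)
      · rintro ⟨g, hg, hgu, hgi⟩
        obtain ⟨k, b, rfl⟩ := (fix_infty_iff _).1 hgi
        obtain ⟨rfl, hb⟩ := (aff_uni _ _).1 hgu
        exact ⟨⟨⟨b, hg⟩, fun h0 => hb (congrArg Subtype.val h0)⟩, rfl⟩
    rw [Nat.card_congr e, Nat.card_eq_fintype_card, Nat.card_eq_fintype_card]
    have := Fintype.card_subtype_compl (fun v : V => v = 0)
    rw [Fintype.card_subtype_eq] at this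
    have hpos : 0 < Fintype.card V := Fintype.card_pos
    change Fintype.card {v : V // ¬ v = 0} + 1 = _
    rw [this]; omega
  have cS : Nat.card {g : ProjectiveGL2 F // g ∈ M ∧ g • (∞ : OnePoint L) = ∞} = Nat.card V * Nat.card K := by
    have hch : ∀ k : K, ∃ b, aff k.1 b ∈ M := fun k => k.2
    choose β hβ using hch
    have e : (V × K) ≃ {g : ProjectiveGL2 F // g ∈ M ∧ g • (∞ : OnePoint L) = ∞} := by
      refine Equiv.ofBijective (fun x => ⟨aff x.2.1 (β x.2 + x.1.1), ?_, (fix_infty_iff _).2 ⟨_, _, rfl⟩⟩) ⟨?_, ?_⟩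
      · have := M.mul_mem ((hV _).1 x.1.2) (hβ x.2)
        rw [aff_mul] at this
        simpa using this
      · rintro ⟨v, k⟩ ⟨w, l⟩ hvw
        obtain ⟨r1, r2⟩ := aff_inj (congrArg Subtype.val hvw)
        have : k = l := Subtype.ext r1
        subst this
        have : v = w := Subtype.ext (add_left_cancel r2)
        rw [this]
      · rintro ⟨g, hg, hgi⟩
        obtain ⟨k, b, rfl⟩ := (fix_infty_iff _).1 hgi
        have hk : k ∈ K := ⟨b, hg⟩
        have hv : b - β ⟨k, hk⟩ ∈ V := by
          rw [hV]
          have := M.mul_mem hg (M.inv_mem (hβ ⟨k, hk⟩))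
          rw [aff_inv, aff_mul] at this
          convert this using 2
          · simp
          · simp; ring
        refine ⟨(⟨_, hv⟩, ⟨k, hk⟩), Subtype.ext ?_⟩
        simp
    rw [← Nat.card_congr e, Nat.card_prod]
  have hQodd : Odd (Nat.card V) := by
    have := V.card_addSubgroup_dvd_card
    rw [Nat.card_eq_fintype_card (α := F), hF] at this
    exact Odd.of_dvd_nat hodd.pow this
  set Q := Nat.card V with hQ
  set k := Nat.card K with hk
  have hQ3 : 3 ≤ Q := by omega
  obtain ⟨v0, hv0, hv00⟩ : ∃ v ∈ V, v ≠ 0 := by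
    by_contra hcon
    push Not at hcon
    have : V = ⊥ := by
      rw [eq_bot_iff]; intro v hv; exact hcon v hv
    rw [hQ, this] at hQ3
    simp at hQ3
  have hkpos : 0 < k := Nat.card_pos
  -- the map K → V minus 0
  let f : K → {v : V // v ≠ 0} := fun k => ⟨⟨(k.1 : F) * v0, hKV _ k.2 _ hv0⟩, fun h0 =>
    mul_ne_zero k.1.ne_zero hv00 (congrArg Subtype.val h0)⟩
  have hf : Function.Injective f := by
    intro a b hab
    have := congrArg (fun x => x.1.1) hab
    exact Subtype.ext (Units.ext (mul_right_cancel₀ hv00 this))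
  have cV : Nat.card {v : V // v ≠ 0} = Q - 1 := by
    rw [hQ, Nat.card_eq_fintype_card, Nat.card_eq_fintype_card]
    have := Fintype.card_subtype_compl (fun v : V => v = 0)
    rw [Fintype.card_subtype_eq] at this
    exact this
  have hkQ : k ≤ Q - 1 := by
    rw [← cV]; exact Nat.card_le_card_of_injective f hf
  have hke : Even k := by
    rw [cS] at hev
    rcases Nat.even_mul.1 hev with h | h
    · exact absurd hQodd (Nat.not_odd_iff_even.2 h)
    · exact h
  rw [cS] at h1
  have h2' : o1 + N = 2 + N * (Q - 1) := by
    rw [h2, ← cU]; rfl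
  obtain ⟨hkq, -⟩ := arith_unip o1 m1 Q k N h1 h2' hkQ hN hQ3 hm hke hkpos
  have hbij : Function.Bijective f := by
    rw [Nat.bijective_iff_injective_and_card]
    exact ⟨hf, by rw [cV]; exact hkq⟩
  have hmemK : ∀ e : F, e ≠ 0 → e * v0 ∈ V → ∃ k ∈ K, (k : F) = e := by
    intro e he hev
    obtain ⟨k, hk⟩ := hbij.2 ⟨⟨e * v0, hev⟩, fun h0 => mul_ne_zero he hv00 (congrArg Subtype.val h0)⟩
    have := congrArg (fun x => x.1.1) hk
    exact ⟨k.1, k.2, mul_right_cancel₀ hv00 this⟩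
  let E : Subfield F :=
    { carrier := {e | e * v0 ∈ V}
      mul_mem' := by
        intro a b ha hb
        by_cases ha0 : a = 0
        · simp only [Set.mem_setOf_eq, ha0, zero_mul]; exact V.zero_mem
        · obtain ⟨k, hk, rfl⟩ := hmemK a ha0 ha
          simp only [Set.mem_setOf_eq, mul_assoc]
          exact hKV k hk _ hb
      one_mem' := by simpa using hv0
      add_mem' := by
        intro a b ha hb
        simp only [Set.mem_setOf_eq, add_mul]
        exact V.add_mem ha hb
      zero_mem' := by simp only [Set.mem_setOf_eq, zero_mul]; exact V.zero_mem
      neg_mem' := by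
        intro a ha
        simp only [Set.mem_setOf_eq, neg_mul]
        exact V.neg_mem ha
      inv_mem' := by
        intro a ha
        by_cases ha0 : a = 0
        · simp only [Set.mem_setOf_eq, ha0, _root_.inv_zero, zero_mul]; exact V.zero_mem
        · obtain ⟨k, hk, rfl⟩ := hmemK a ha0 ha
          have := hKV k⁻¹ (K.inv_mem hk) _ hv0
          simpa using this }
  have hE : ∀ e, e ∈ E ↔ e * v0 ∈ V := fun e => Iff.rfl
  obtain ⟨g0, hg0, hg0S, hg0i⟩ := hout
  obtain ⟨k0, b0, rfl⟩ := (fix_infty_iff _).1 hg0i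
  rw [aff_socle] at hg0S
  have hEtop := subfield_top hp hodd hF E k0 ((hE _).2 (hKV _ ⟨b0, hg0⟩ _ hv0)) hg0S
  have hVtop : ∀ v, v ∈ V := by
    intro v
    have : v / v0 ∈ E := by rw [hEtop]; trivial
    rw [hE] at this
    rwa [div_mul_cancel₀ _ hv00] at this
  have hall : ∀ k b, aff k b ∈ M := by
    intro k b
    have : (k : F) ∈ E := by rw [hEtop]; trivial
    obtain ⟨l, ⟨c, hc⟩, hl⟩ := hmemK k k.ne_zero ((hE _).1 this)
    have hlk : l = k := Units.ext hl
    subst hlk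
    have := M.mul_mem ((hV _).1 (hVtop (b - c))) hc
    rw [aff_mul] at this
    simpa using this
  obtain ⟨x, hx, hxi⟩ := hmove
  rw [eq_top_iff]
  intro g _
  by_cases hgi : g • (∞ : OnePoint L) = ∞
  · obtain ⟨k, b, rfl⟩ := (fix_infty_iff _).1 hgi
    exact hall k b
  · obtain ⟨a, b, c, d, hd, rfl⟩ := exists_pmat g
    obtain ⟨a', b', c', d', hd', rfl⟩ := exists_pmat x
    rw [Ne, pmat_smul_infty] at hxi
    rw [pmat_smul_infty] at hgi
    have hfix : ((aff 1 (a / c - a' / c') * pmat a' b' c' d' hd')⁻¹ * pmat a b c d hd) • (∞ : OnePoint L) = ∞ := by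
      rw [mul_smul, inv_smul_eq_iff]
      unfold aff
      have hne : c' ≠ 0 := hxi
      rw [pmat_mul, pmat_smul_infty_eq hgi, pmat_smul_infty_eq (by simpa using hxi)]
      congr 2
      simp
      field_simp
      ring
    obtain ⟨k, b', h⟩ := (fix_infty_iff _).1 hfix
    have h3 := M.mul_mem (M.mul_mem (hall 1 (a / c - a' / c')) hx) (hall k b')
    rwa [← h, mul_inv_cancel_left] at h3
end Borel

section Key
open OnePoint

lemma conj_smul_iff {G X : Type} [Group G] [MulAction G X] (g h : G) (P : X) :
    (h * g * h⁻¹) • (h • P) = h • P ↔ g • P = P := by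
  rw [mul_smul, inv_smul_smul, mul_smul, smul_left_cancel_iff]

lemma exists_to_rational {F : Type} [Field F] {L : Type} [Field L] [DecidableEq L] [Algebra F L] (P : OnePoint L)
    (hP : P = ∞ ∨ ∃ z : F, P = ((algebraMap F L z : L) : OnePoint L)) :
    ∃ h : ProjectiveGL2 F, h • (∞ : OnePoint L) = P := by
  rcases hP with rfl | ⟨z, rfl⟩
  · exact ⟨1, one_smul _ _⟩
  · refine ⟨pmat z (-1) 1 0 (by simp), ?_⟩
    rw [pmat_smul_infty_eq one_ne_zero]; simp

theorem key_thm (p n : ℕ) (hp : Nat.Prime p) (hodd : Odd p) (hn : 1 ≤ n)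
    (F : Type) [Field F] [Fintype F] (hF : Fintype.card F = p ^ 2 ^ n)
    (x : ProjectiveGL2 F) (hx1 : x ≠ 1) (hx2 : x * x = 1) (hxS : x ∉ socleSL2 F)
    (M : Subgroup (ProjectiveGL2 F)) (hM : M ≠ ⊤) (hxM : x ∈ M) :
    ∃ t : ProjectiveGL2 F, t ≠ 1 ∧ t * t = 1 ∧ ∀ h ∈ M, h * t = t * h := by
  classical
  have hFodd : Odd (Fintype.card F) := by rw [hF]; exact hodd.pow
  have hch := two_ne_of_odd hFodd
  have h2 : (2 : F) ≠ 0 := Ring.two_ne_zero hch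
  have hcharp : CharP F p := by
    obtain ⟨p', hp'⟩ := CharP.exists F
    obtain ⟨n', hp1, hc1⟩ := FiniteField.card F p'
    have : p' ∣ p ^ 2 ^ n := by rw [← hF, hc1]; exact dvd_pow_self _ n'.ne_zero
    have := (Nat.prime_dvd_prime_iff_eq hp1 hp).1 (hp1.dvd_of_dvd_pow this)
    rwa [← this]
  have : Fact p.Prime := ⟨hp⟩
  have hcr : Fintype.card F = (p ^ 2 ^ (n - 1)) ^ 2 := by
    rw [hF, ← pow_mul, ← pow_succ, Nat.sub_add_cancel hn]
  have h2s : IsSquare (2 : F) :=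
    isSquare_of_pow_eq _ hodd.pow hcr 2 (by simpa using natCast_pow_eq (F := F) p (2 ^ (n - 1)) 2)
  have hm1 : IsSquare (-1 : F) :=
    isSquare_of_pow_eq _ hodd.pow hcr (-1) (by rw [(hodd.pow).neg_one_pow])
  obtain ⟨L, _, _, _, hL⟩ := exists_ext F hFodd
  let : Fintype M := Fintype.ofFinite _
  let : Fintype (OnePoint L) := inferInstanceAs (Fintype (Option L))
  have hS2 : ∀ g h : ProjectiveGL2 F, g ∉ socleSL2 F → h ∉ socleSL2 F → g * h ∈ socleSL2 F := by
    intro g h hg hh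
    obtain ⟨a, b, c, d, hd, rfl⟩ := exists_pmat g
    obtain ⟨a', b', c', d', hd', rfl⟩ := exists_pmat h
    rw [pmat_mul, mem_socle_iff]
    rw [mem_socle_iff] at hg hh
    have := mul_nonsquare hch _ _ hg hh
    convert this using 1
    ring
  have hSc : ∀ g h : ProjectiveGL2 F, g ∈ socleSL2 F → h * g * h⁻¹ ∈ socleSL2 F := by
    intro g h hg
    obtain ⟨a, b, c, d, hd, rfl⟩ := exists_pmat g
    obtain ⟨a', b', c', d', hd', rfl⟩ := exists_pmat h
    rw [pmat_inv, pmat_mul, pmat_mul, mem_socle_iff]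
    rw [mem_socle_iff] at hg
    obtain ⟨s, hs⟩ := hg
    exact ⟨s * (a' * d' - b' * c'), by linear_combination (a' * d' - b' * c') ^ 2 * hs⟩
  have htwo : ∀ g : M, (g : ProjectiveGL2 F) ≠ 1 → ¬ IsUni (g : ProjectiveGL2 F) → nFix (OnePoint L) g = 2 := by
    rintro ⟨g, hg⟩ hg1 hgu
    obtain ⟨a, b, c, d, hd, rfl⟩ := exists_pmat g
    obtain ⟨P, P', hne, hfix⟩ := fix_two (L := L) (h := hd) h2 hL (fun h0 => hgu ((isUni_pmat (h := hd)).2 ⟨hg1, h0⟩))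
    unfold nFix
    rw [Finset.card_eq_two]
    refine ⟨P, P', hne, ?_⟩
    ext Q
    simp only [Finset.mem_filter, Finset.mem_univ, true_and, Finset.mem_insert, Finset.mem_singleton]
    exact hfix Q
  have huni : ∀ g : ProjectiveGL2 F, IsUni g → ∃ P : OnePoint L, (∀ Q : OnePoint L, g • Q = Q ↔ Q = P) ∧
      (P = ∞ ∨ ∃ z : F, P = ((algebraMap F L z : L) : OnePoint L)) := by
    intro g hg
    obtain ⟨a, b, c, d, hd, rfl⟩ := exists_pmat g
    exact fix_one h2 (isUni_pmat.1 hg).2 hg.1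
  have hxfix : ∀ P : OnePoint L, x • P = P → P ≠ ∞ ∧ ∀ z : F, P ≠ ((algebraMap F L z : L) : OnePoint L) := by
    intro P hP
    obtain ⟨a, b, c, hd, rfl⟩ := involution_form hx1 hx2
    exact outer_no_rational hm1 hxS P hP
  obtain ⟨P₁, hP₁⟩ : ∃ P₁ : OnePoint L, x • P₁ = P₁ := by
    have := htwo ⟨x, hxM⟩ hx1 (fun h0 => hxS (isUni_socle h2 _ h0))
    unfold nFix at this
    obtain ⟨P, hP⟩ := Finset.card_pos.1 (this ▸ Nat.two_pos)
    exact ⟨P, (Finset.mem_filter.1 hP).2⟩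
  have hcnt : ∀ (pr : ProjectiveGL2 F → Prop) (P : OnePoint L), cntFix (fun g : M => pr g) P =
      Nat.card {g : ProjectiveGL2 F // g ∈ M ∧ pr g ∧ g • P = P} := by
    intro pr P
    rw [cntFix, ← Fintype.card_subtype, ← Nat.card_eq_fintype_card]
    exact Nat.card_congr
      { toFun := fun g => ⟨g.1.1, g.1.2, g.2⟩
        invFun := fun g => ⟨⟨g.1, g.2.1⟩, g.2.2⟩
        left_inv := fun _ => rfl
        right_inv := fun _ => rfl }
  have main := counting (M := M) (X := OnePoint L) (fun g => (g : ProjectiveGL2 F) ∈ socleSL2 F)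
    (fun g => IsUni (g : ProjectiveGL2 F)) (one_mem _) (fun g h => hSc _ _) (fun g h => isUni_conj _ _)
    (by
      intro g h hg
      by_cases hh : (h : ProjectiveGL2 F) ∈ socleSL2 F
      · left
        refine ⟨hh, fun hgh => hg ?_⟩
        have := mul_mem hgh (inv_mem hh)
        simpa using this
      · right; exact ⟨hh, hS2 _ _ hg hh⟩)
    (fun g => isUni_socle h2 _) (fun g hg h0 => hg.1 (by rw [h0]; rfl))
    (fun g hg => ⟨(isUni_inv h2 _ hg).1, fun h0 => (isUni_inv h2 _ hg).2 (congrArg Subtype.val h0)⟩)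
    (fun g hg => htwo g (fun h0 => hg (by rw [h0]; exact one_mem _)) (fun h0 => hg (isUni_socle h2 _ h0)))
    (fun g _ hg1 hgu => htwo g (fun h0 => hg1 (Subtype.ext h0)) hgu)
    (by
      intro g hg
      obtain ⟨P, hP, -⟩ := huni _ hg
      unfold nFix
      rw [Finset.card_eq_one]
      refine ⟨P, ?_⟩
      ext Q
      simp only [Finset.mem_filter, Finset.mem_univ, true_and, Finset.mem_singleton]
      exact hP Q)
    (by
      intro P g hgP hgS hc4
      rw [hcnt (fun _ => True)] at hc4
      refine four_stab (L := L) h2 h2s (M ⊓ MulAction.stabilizer (ProjectiveGL2 F) P) ?_ P ?_ hS2 g ⟨g.2, hgP⟩ hgS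
      · rw [← hc4]
        refine Nat.card_congr (Equiv.subtypeEquivRight fun g => ?_)
        rw [Subgroup.mem_inf, MulAction.mem_stabilizer_iff]
        simp
      · intro g hg
        exact hg.2)
    ⟨x, hxM⟩ hxS P₁ hP₁
    (by
      intro g hg hgP
      obtain ⟨P, hP, hr⟩ := huni _ hg
      have : P₁ = P := (hP P₁).1 hgP
      obtain ⟨h3, h4⟩ := hxfix P₁ hP₁
      rcases hr with hr | ⟨z, hr⟩
      · exact h3 (this.trans hr)
      · exact h4 z (this.trans hr))
  rcases main with ⟨P, P', hPP, hall, g, hg1, hgP, hgP'⟩ | ⟨P₂, ⟨g, hgS, hgP⟩, ⟨u, hu, huP⟩, hcu, he1, he2, k1, k2, k3⟩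
  · exact outcome_one h2 M hPP (fun g hg => hall ⟨g, hg⟩) g (fun h0 => hg1 (Subtype.ext h0)) hgP hgP'
  · exfalso
    apply hM
    obtain ⟨P, hP, hr⟩ := huni _ hu
    have hPe : P₂ = P := (hP P₂).1 huP
    subst hPe
    obtain ⟨h, hh⟩ := exists_to_rational P₂ hr
    have hxP : x • P₂ ≠ P₂ := by
      intro h0
      obtain ⟨h3, h4⟩ := hxfix P₂ h0
      rcases hr with hr | ⟨z, hr⟩
      · exact h3 hr
      · exact h4 z hr
    have hconj : ∀ pr : ProjectiveGL2 F → Prop, (∀ g, pr (h * g * h⁻¹) ↔ pr g) →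
        cntFix (fun g : M => pr g) P₂ = Nat.card {g : ProjectiveGL2 F // g ∈ M.comap (MulAut.conj h).toMonoidHom ∧
          pr g ∧ g • (∞ : OnePoint L) = ∞} := by
      intro pr hpr
      rw [hcnt]
      symm
      refine Nat.card_congr (Equiv.subtypeEquiv (MulAut.conj h).toEquiv fun g => ?_)
      rw [Subgroup.mem_comap]
      simp only [MulEquiv.toMonoidHom_eq_coe, MonoidHom.coe_coe, MulEquiv.toEquiv_eq_coe, EquivLike.coe_coe,
        MulAut.conj_apply]
      rw [hpr, ← hh, conj_smul_iff]
    have c1 := hconj (fun _ => True) (fun _ => Iff.rfl)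
    have c2 := hconj IsUni (fun g => ⟨fun h0 => by
      have := isUni_conj _ h⁻¹ h0
      simpa [mul_assoc] using this, isUni_conj g h⟩)
    simp only [true_and] at c1
    rw [c2] at hcu k3
    rw [c1] at he2 k2
    have hN : 2 ≤ (orbF M P₂).card := by
      have : ({P₂, x • P₂} : Finset (OnePoint L)) ⊆ orbF M P₂ := by
        intro Q hQ
        rw [mem_orbF]
        simp only [Finset.mem_insert, Finset.mem_singleton] at hQ
        rcases hQ with rfl | rfl
        · exact ⟨1, one_smul _ _⟩
        · exact ⟨⟨x, hxM⟩, rfl⟩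
      have h5 := Finset.card_le_card this
      rwa [Finset.card_pair (Ne.symm hxP)] at h5
    have htop := borel_top (L := L) hp hodd hF (M.comap (MulAut.conj h).toMonoidHom) _ _ _ hN (k1.trans k2.symm) k3 hcu
      he1 he2 ⟨h⁻¹ * g * h, by simp [mul_assoc], by
        intro h0
        have := hSc _ h h0
        apply hgS
        simpa [mul_assoc] using this, by
        rw [← conj_smul_iff _ h, hh]
        have hgP2 : (g : ProjectiveGL2 F) • P₂ = P₂ := hgP
        simpa [mul_assoc] using hgP2⟩ ⟨h⁻¹ * x * h, by simpa [mul_assoc] using hxM, by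
        rw [Ne, ← conj_smul_iff _ h, hh]
        simpa [mul_assoc] using hxP⟩
    rw [eq_top_iff]
    intro g _
    have : h⁻¹ * g * h ∈ M.comap (MulAut.conj h).toMonoidHom := by rw [htop]; trivial
    simpa [mul_assoc] using this
end Key

section Torus
variable {F : Type} [Field F]

/-- the torus attached to the traceless matrix `(a b; c -a)` -/
noncomputable def torus (a b c : F) : Subgroup (ProjectiveGL2 F) where
  carrier := {g | ∃ (u v : F) (h : (u + v * a) * (u - v * a) - (v * b) * (v * c) ≠ 0),
    g = pmat (u + v * a) (v * b) (v * c) (u - v * a) h}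
  one_mem' := ⟨1, 0, by simp, by rw [pmat_one]; apply pmat_congr <;> simp⟩
  mul_mem' := by
    rintro _ _ ⟨u, v, h, rfl⟩ ⟨u', v', h', rfl⟩
    refine ⟨u * u' + v * v' * (a * a + b * c), u * v' + u' * v, ?_, ?_⟩
    · have := mul_ne_zero h h'
      intro h0; apply this; linear_combination h0
    · rw [pmat_mul]
      apply pmat_congr <;> ring
  inv_mem' := by
    rintro _ ⟨u, v, h, rfl⟩
    refine ⟨u, -v, ?_, ?_⟩
    · intro h0; apply h; linear_combination h0
    · rw [pmat_inv]
      apply pmat_congr <;> ring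

lemma mem_torus {a b c : F} {g : ProjectiveGL2 F} : g ∈ torus a b c ↔
    ∃ (u v : F) (h : (u + v * a) * (u - v * a) - (v * b) * (v * c) ≠ 0),
    g = pmat (u + v * a) (v * b) (v * c) (u - v * a) h := Iff.rfl

lemma torus_comm {a b c : F} (g h : ProjectiveGL2 F) (hg : g ∈ torus a b c) (hh : h ∈ torus a b c) :
    g * h = h * g := by
  obtain ⟨u, v, h, rfl⟩ := hg
  obtain ⟨u', v', h', rfl⟩ := hh
  rw [pmat_mul, pmat_mul]
  apply pmat_congr <;> ring

lemma t_mem_torus {a b c : F} (h : a * (-a) - b * c ≠ 0) : pmat a b c (-a) h ∈ torus a b c :=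
  ⟨0, 1, by simpa using h, by apply pmat_congr <;> simp⟩

/-- commuting matrices -/
lemma torus_of_comm (h2 : (2 : F) ≠ 0) {a b c : F} (h : a * (-a) - b * c ≠ 0) {x y z w : F}
    {hw : x * w - y * z ≠ 0} (e1 : y * c = z * b) (e2 : (x - w) * b = 2 * a * y) (e3 : (x - w) * c = 2 * a * z) :
    pmat x y z w hw ∈ torus a b c := by
  have : ∃ v, x - w = 2 * (v * a) ∧ y = v * b ∧ z = v * c := by
    by_cases hb : b = 0
    · by_cases hc : c = 0
      · have ha : a ≠ 0 := by rintro rfl; subst hb; simp at h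
        refine ⟨(x - w) / (2 * a), by field_simp, ?_, ?_⟩
        · have : (2 * a) * y = 0 := by rw [← e2, hb, mul_zero]
          rw [hb, mul_zero]; exact (mul_eq_zero.1 this).resolve_left (mul_ne_zero h2 ha)
        · have : (2 * a) * z = 0 := by rw [← e3, hc, mul_zero]
          rw [hc, mul_zero]; exact (mul_eq_zero.1 this).resolve_left (mul_ne_zero h2 ha)
      · refine ⟨z / c, ?_, ?_, by field_simp⟩
        · field_simp; linear_combination e3
        · field_simp; linear_combination e1
    · refine ⟨y / b, ?_, by field_simp, ?_⟩
      · field_simp; linear_combination e2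
      · field_simp; linear_combination -e1
  obtain ⟨v, r1, r2, r3⟩ := this
  have e1 : x = (x + w) / 2 + v * a := by field_simp; linear_combination r1
  have e2 : w = (x + w) / 2 - v * a := by field_simp; linear_combination -r1
  refine ⟨(x + w) / 2, v, ?_, ?_⟩
  · rw [← e1, ← e2, ← r2, ← r3]; exact hw
  · exact pmat_congr _ e1 r2 r3 e2

lemma cent_cases (h2 : (2 : F) ≠ 0) {a b c : F} {h : a * (-a) - b * c ≠ 0} {g : ProjectiveGL2 F}
    (hg : g * pmat a b c (-a) h = pmat a b c (-a) h * g) (hgT : g ∉ torus a b c) :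
    ∃ (x y z : F) (hx : x * (-x) - y * z ≠ 0), g = pmat x y z (-x) hx ∧ 2 * a * x + b * z + c * y = 0 := by
  obtain ⟨x, y, z, w, hw, rfl⟩ := exists_pmat g
  rw [pmat_mul, pmat_mul, pmat_eq_iff] at hg
  obtain ⟨k, hk, e1, e2, e3, e4⟩ := hg
  have hk2 : (k - 1) * (k + 1) = 0 := by
    apply mul_right_cancel₀ (mul_ne_zero h hw)
    have d1 := congrArg₂ (· * ·) e1 e4
    have d2 := congrArg₂ (· * ·) e2 e3
    linear_combination d2 - d1
  rcases mul_eq_zero.1 hk2 with hk1 | hk1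
  · have hk' : k = 1 := sub_eq_zero.1 hk1
    subst hk'
    exfalso
    apply hgT
    apply torus_of_comm h2 h
    · linear_combination -e1
    · linear_combination -e2
    · linear_combination e3
  · have hk' : k = -1 := eq_neg_of_add_eq_zero_left hk1
    subst hk'
    have hxw : w = -x := by
      by_contra hne
      have hs : x + w ≠ 0 := fun h0 => hne (eq_neg_of_add_eq_zero_right h0)
      have hb : b = 0 := by
        apply mul_left_cancel₀ hs; linear_combination e2
      have hc : c = 0 := by
        apply mul_left_cancel₀ hs; linear_combination e3
      subst hb hc
      have ha : a ≠ 0 := by rintro rfl; simp at h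
      apply hs
      apply mul_left_cancel₀ (mul_ne_zero h2 ha)
      have f1 : 2 * a * x = 0 := by linear_combination e1
      have f4 : 2 * a * w = 0 := by linear_combination -e4
      linear_combination f1 + f4
    subst hxw
    exact ⟨x, y, z, hw, rfl, by linear_combination e1⟩

lemma cent_sq (h2 : (2 : F) ≠ 0) {a b c : F} {h : a * (-a) - b * c ≠ 0} {g : ProjectiveGL2 F}
    (hg : g * pmat a b c (-a) h = pmat a b c (-a) h * g) (hgT : g ∉ torus a b c) : g * g = 1 := by
  obtain ⟨x, y, z, hx, rfl, -⟩ := cent_cases h2 hg hgT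
  rw [pmat_mul, pmat_eq_one_iff]
  refine ⟨by ring, by ring, by ring⟩

lemma cent_mul (h2 : (2 : F) ≠ 0) {a b c : F} {h : a * (-a) - b * c ≠ 0} {g g' : ProjectiveGL2 F}
    (hg : g * pmat a b c (-a) h = pmat a b c (-a) h * g) (hgT : g ∉ torus a b c)
    (hg' : g' * pmat a b c (-a) h = pmat a b c (-a) h * g') (hgT' : g' ∉ torus a b c) :
    g * g' ∈ torus a b c := by
  obtain ⟨x, y, z, hx, rfl, e⟩ := cent_cases h2 hg hgT
  obtain ⟨x', y', z', hx', rfl, e'⟩ := cent_cases h2 hg' hgT'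
  rw [pmat_mul]
  apply torus_of_comm h2 h
  · linear_combination x * e' - x' * e
  · linear_combination -y' * e + y * e'
  · linear_combination z' * e - z * e'

lemma torus_inter (h2 : (2 : F) ≠ 0) {a b c a' b' c' : F} (h : a * (-a) - b * c ≠ 0)
    (h' : a' * (-a') - b' * c' ≠ 0) {g : ProjectiveGL2 F} (hg : g ∈ torus a b c) (hg' : g ∈ torus a' b' c')
    (hg1 : g ≠ 1) : pmat a b c (-a) h = pmat a' b' c' (-a') h' := by
  obtain ⟨u, v, hd, rfl⟩ := hg
  obtain ⟨u', v', hd', he⟩ := hg'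
  have hv : v ≠ 0 := by
    rintro rfl; apply hg1; rw [pmat_eq_one_iff]; simp
  have hv' : v' ≠ 0 := by
    rintro rfl; apply hg1; rw [he, pmat_eq_one_iff]; simp
  rw [pmat_eq_iff] at he
  obtain ⟨k, hk, e1, e2, e3, e4⟩ := he
  rw [pmat_eq_iff]
  have f1 : v' * a' = k * (v * a) := by
    apply mul_left_cancel₀ h2; linear_combination e1 - e4
  refine ⟨k * v / v', by positivity, ?_, ?_, ?_, ?_⟩
  · field_simp; linear_combination f1
  · field_simp; linear_combination e2
  · field_simp; linear_combination e3
  · field_simp; linear_combination -f1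

/-- an element of the centralizer outside the torus -/
lemma exists_refl (h2 : (2 : F) ≠ 0) {a b c : F} (h : a * (-a) - b * c ≠ 0) :
    ∃ s : ProjectiveGL2 F, s * pmat a b c (-a) h = pmat a b c (-a) h * s ∧ s ∉ torus a b c := by
  have : ∃ x y z : F, x * (-x) - y * z ≠ 0 ∧ 2 * a * x + b * z + c * y = 0 := by
    by_cases hb : b = 0
    · by_cases hc : c = 0
      · exact ⟨0, 1, 1, by simp, by simp [hb, hc]⟩
      · exact ⟨c, -2 * a, 0, by simpa using hc, by ring⟩
    · by_cases hc : c = 0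
      · exact ⟨b, 0, -2 * a, by simpa using hb, by ring⟩
      · exact ⟨0, b, -c, by simp [hb, hc], by ring⟩
  obtain ⟨x, y, z, hx, he⟩ := this
  refine ⟨pmat x y z (-x) hx, ?_, ?_⟩
  · rw [pmat_mul, pmat_mul, pmat_eq_iff]
    refine ⟨-1, by simp, ?_, ?_, ?_, ?_⟩
    · linear_combination he
    · ring
    · ring
    · linear_combination he
  · rintro ⟨u, v, hu, e⟩
    rw [pmat_eq_iff] at e
    obtain ⟨k, hk, e1, e2, e3, e4⟩ := e
    have hu0 : u = 0 := by
      apply mul_left_cancel₀ h2; linear_combination e1 + e4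
    subst hu0
    have : 2 * (v * (a * (-a) - b * c)) = 0 := by
      linear_combination -2 * a * e1 - b * e3 - c * e2 - k * he
    have hv := (mul_eq_zero.1 ((mul_eq_zero.1 this).resolve_left h2)).resolve_right h
    subst hv
    simp at hu
end Torus

section Dih

lemma dihedral_of {G : Type} [Group G] (T C : Subgroup G) (hT : IsCyclic T) (hTC : T ≤ C) (s : G) (hsC : s ∈ C)
    (hsT : s ∉ T) (hsq : ∀ g ∈ C, g ∉ T → g * g = 1) (hm : ∀ g ∈ C, g ∉ T → s * g ∈ T) :
    Nonempty (C ≃* DihedralGroup (Nat.card T)) := by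
  have hss : s * s = 1 := hsq s hsC hsT
  have hinv : ∀ t ∈ T, t * s = s * t⁻¹ := by
    intro t ht
    have h1 : s * t ∉ T := fun h0 => hsT (by simpa using T.mul_mem h0 (T.inv_mem ht))
    have h2 := hsq _ (C.mul_mem hsC (hTC ht)) h1
    have h3 : s * (t * s * t) = 1 := by rw [← h2]; group
    have h4 : t * s * t = s := by
      have : s * (t * s * t) = s * s := h3.trans hss.symm
      exact mul_left_cancel this
    rw [eq_mul_inv_iff_mul_eq, h4]
  let e := zmodCyclicMulEquiv hT
  let ρ : ZMod (Nat.card T) → G := fun i => (e (Multiplicative.ofAdd i)).1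
  have hρT : ∀ i, ρ i ∈ T := fun i => (e (Multiplicative.ofAdd i)).2
  have hadd : ∀ i j, ρ (i + j) = ρ i * ρ j := by
    intro i j
    simp only [ρ, ofAdd_add, map_mul, Subgroup.coe_mul]
  have hneg : ∀ i, ρ (-i) = (ρ i)⁻¹ := by
    intro i
    simp only [ρ, ofAdd_neg, map_inv, Subgroup.coe_inv]
  have hsub : ∀ i j, ρ (i - j) = (ρ j)⁻¹ * ρ i := by
    intro i j
    rw [sub_eq_neg_add, hadd, hneg]
  let f : DihedralGroup (Nat.card T) → C := fun d => match d with
    | .r i => ⟨ρ i, hTC (hρT i)⟩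
    | .sr i => ⟨s * ρ i, C.mul_mem hsC (hTC (hρT i))⟩
  have hfm : ∀ x y, f (x * y) = f x * f y := by
    rintro (i | i) (j | j)
    · apply Subtype.ext
      change ρ (i + j) = ρ i * ρ j
      exact hadd i j
    · apply Subtype.ext
      change s * ρ (j - i) = ρ i * (s * ρ j)
      rw [hsub, ← mul_assoc, ← mul_assoc, hinv _ (hρT i)]
    · apply Subtype.ext
      change s * ρ (i + j) = s * ρ i * ρ j
      rw [hadd, mul_assoc]
    · apply Subtype.ext
      change ρ (j - i) = s * ρ i * (s * ρ j)
      rw [hsub, mul_assoc, ← mul_assoc (ρ i), hinv _ (hρT i), mul_assoc, ← mul_assoc s, hss, one_mul]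
  have hinj : Function.Injective ρ := by
    intro i j hij
    have := e.injective (Subtype.ext hij)
    exact Multiplicative.ofAdd.injective this
  have hbij : Function.Bijective f := by
    constructor
    · rintro (i | i) (j | j) hij
      · have : ρ i = ρ j := congrArg (fun c : C => (c : G)) hij
        rw [hinj this]
      · have : ρ i = s * ρ j := congrArg (fun c : C => (c : G)) hij
        exfalso
        apply hsT
        rw [eq_mul_inv_of_mul_eq this.symm]
        exact T.mul_mem (hρT _) (T.inv_mem (hρT _))
      · have : s * ρ i = ρ j := congrArg (fun c : C => (c : G)) hij
        exfalso
        apply hsT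
        rw [eq_mul_inv_of_mul_eq this]
        exact T.mul_mem (hρT _) (T.inv_mem (hρT _))
      · have : s * ρ i = s * ρ j := congrArg (fun c : C => (c : G)) hij
        rw [hinj (mul_left_cancel this)]
    · have hsurj : ∀ t ∈ T, ∃ i, ρ i = t := by
        intro t ht
        obtain ⟨i, hi⟩ := e.surjective ⟨t, ht⟩
        exact ⟨Multiplicative.toAdd i, congrArg Subtype.val hi⟩
      rintro ⟨g, hg⟩
      by_cases hgT : g ∈ T
      · obtain ⟨i, hi⟩ := hsurj g hgT
        exact ⟨.r i, Subtype.ext hi⟩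
      · obtain ⟨i, hi⟩ := hsurj _ (hm g hg hgT)
        refine ⟨.sr i, Subtype.ext ?_⟩
        change s * ρ i = g
        rw [hi, ← mul_assoc, hss, one_mul]
  exact ⟨(MulEquiv.mk' (Equiv.ofBijective f hbij) hfm).symm⟩

variable {F : Type} [Field F]

lemma torus_cyclic [Fintype F] (hodd : Odd (Fintype.card F)) {a b c : F} (h : a * (-a) - b * c ≠ 0) :
    IsCyclic (torus a b c) := by
  have h2 : (2 : F) ≠ 0 := Ring.two_ne_zero (two_ne_of_odd hodd)
  obtain ⟨L, _, _, _, hL⟩ := exists_ext F hodd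
  obtain ⟨s, hs⟩ := hL (a * a + b * c)
  have h2L : (2 : L) ≠ 0 := by
    have := (map_ne_zero (algebraMap F L)).2 h2
    rwa [map_ofNat] at this
  have hs0 : s ≠ 0 := by
    rintro rfl
    rw [mul_zero, map_eq_zero] at hs
    apply h; linear_combination -hs
  have hch : ∀ g : torus a b c, ∃ uv : F × F,
      (uv.1 + uv.2 * a) * (uv.1 - uv.2 * a) - (uv.2 * b) * (uv.2 * c) ≠ 0 ∧
      ∀ h, g.1 = pmat (uv.1 + uv.2 * a) (uv.2 * b) (uv.2 * c) (uv.1 - uv.2 * a) h := by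
    rintro ⟨g, u, v, hd, he⟩
    exact ⟨(u, v), hd, fun _ => he⟩
  choose φ hφ1 hφ2 using hch
  let A := algebraMap F L
  have hne : ∀ u v : F, (u + v * a) * (u - v * a) - (v * b) * (v * c) ≠ 0 →
      A u + A v * s ≠ 0 ∧ A u - A v * s ≠ 0 := by
    intro u v hd
    rw [← mul_ne_zero_iff]
    have : (A u + A v * s) * (A u - A v * s) = A ((u + v * a) * (u - v * a) - (v * b) * (v * c)) := by
      simp only [map_add, map_mul, map_sub] at hs ⊢
      linear_combination A v ^ 2 * hs
    rw [this]
    exact (map_ne_zero _).2 hd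
  let f : torus a b c → L := fun g => (A (φ g).1 + A (φ g).2 * s) / (A (φ g).1 - A (φ g).2 * s)
  have hf : ∀ (g : torus a b c) (u v : F) (hd), g.1 = pmat (u + v * a) (v * b) (v * c) (u - v * a) hd →
      f g = (A u + A v * s) / (A u - A v * s) := by
    intro g u v hd hg
    have e := hφ2 g (hφ1 g)
    rw [hg, pmat_eq_iff] at e
    obtain ⟨k, hk, e1, e2, e3, e4⟩ := e
    have f1 : (φ g).1 = k * u := by
      apply mul_left_cancel₀ h2; linear_combination e1 + e4
    have f2 : (φ g).2 = k * v := by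
      have fa : (φ g).2 * a = k * v * a := by
        apply mul_left_cancel₀ h2; linear_combination e1 - e4
      apply mul_right_cancel₀ h
      linear_combination (-a) * fa - c * e2
    have := hne u v hd
    have hkA : A k ≠ 0 := (map_ne_zero _).2 hk
    simp only [f]
    rw [f1, f2, map_mul, map_mul]
    rw [mul_assoc, ← mul_add, ← mul_sub, mul_div_mul_left _ _ hkA]
  let Φ : torus a b c →* L :=
    { toFun := f
      map_one' := by
        rw [hf 1 1 0 (by simp) (by
          rw [Subgroup.coe_one, pmat_one]; apply pmat_congr <;> simp)]
        simp [A]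
      map_mul' := by
        rintro ⟨_, u, v, hd, rfl⟩ ⟨_, u', v', hd', rfl⟩
        rw [hf ⟨_, u, v, hd, rfl⟩ u v hd rfl, hf ⟨_, u', v', hd', rfl⟩ u' v' hd' rfl,
          hf _ (u * u' + v * v' * (a * a + b * c)) (u * v' + u' * v) (by
            have := mul_ne_zero hd hd'
            intro h0; apply this; linear_combination h0) (by
            rw [Subgroup.coe_mul, pmat_mul]
            apply pmat_congr <;> ring)]
        rw [div_mul_div_comm]
        have hs' : A (a * a + b * c) = s * s := hs
        congr 1
        · simp only [map_add (f := A) (x := u * u'), map_add (f := A) (x := u * v'), map_mul (f := A) (y := a * a + b * c), hs']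
          simp only [map_mul]
          ring
        · simp only [map_add (f := A) (x := u * u'), map_add (f := A) (x := u * v'), map_mul (f := A) (y := a * a + b * c), hs']
          simp only [map_mul]
          ring }
  refine isCyclic_of_injective_ringHom Φ ?_
  rintro ⟨_, u, v, hd, rfl⟩ ⟨_, u', v', hd', rfl⟩ he
  have he' : f _ = f _ := he
  rw [hf ⟨_, u, v, hd, rfl⟩ u v hd rfl, hf ⟨_, u', v', hd', rfl⟩ u' v' hd' rfl, div_eq_div_iff (hne u v hd).2 (hne u' v' hd').2] at he'
  have : 2 * s * (A v * A u' - A u * A v') = 0 := by linear_combination he'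
  have := (mul_eq_zero.1 this).resolve_left (mul_ne_zero h2L hs0)
  have huv : v * u' = u * v' := by
    apply (algebraMap F L).injective
    rw [map_mul, map_mul]; exact sub_eq_zero.1 this
  apply Subtype.ext
  simp only
  rw [pmat_eq_iff]
  have : ∃ k : F, k ≠ 0 ∧ u' = k * u ∧ v' = k * v := by
    by_cases hu : u = 0
    · subst hu
      have hv : v ≠ 0 := by rintro rfl; simp at hd
      have hu' : u' = 0 := by
        apply mul_left_cancel₀ hv; linear_combination huv
      subst hu'
      have hv' : v' ≠ 0 := by rintro rfl; simp at hd'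
      exact ⟨v' / v, div_ne_zero hv' hv, by simp, by field_simp⟩
    · have hu' : u' ≠ 0 := by
        rintro rfl
        have hv' : v' = 0 := by
          apply mul_left_cancel₀ hu; linear_combination -huv
        subst hv'
        simp at hd'
      refine ⟨u' / u, div_ne_zero hu' hu, by field_simp, ?_⟩
      field_simp; linear_combination -huv
  obtain ⟨k, hk, rfl, rfl⟩ := this
  exact ⟨k, hk, by ring, by ring, by ring, by ring⟩

lemma torus_card [Fintype F] (h2 : (2 : F) ≠ 0) {a b c : F} (h : a * (-a) - b * c ≠ 0) :
    Nat.card (torus a b c) = Fintype.card F + 1 ∨ Nat.card (torus a b c) = Fintype.card F - 1 := by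
  classical
  have hd : ∀ z : {z : F // z * z ≠ a * a + b * c}, (z.1 + 1 * a) * (z.1 - 1 * a) - (1 * b) * (1 * c) ≠ 0 := by
    rintro ⟨z, hz⟩ h0
    apply hz; linear_combination h0
  let f : Option {z : F // z * z ≠ a * a + b * c} → torus a b c := fun o => match o with
    | none => 1
    | some z => ⟨pmat (z.1 + 1 * a) (1 * b) (1 * c) (z.1 - 1 * a) (hd z), z.1, 1, hd z, rfl⟩
  have hA : ¬ (b = 0 ∧ c = 0 ∧ a = 0) := by
    rintro ⟨rfl, rfl, rfl⟩; simp at h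
  have hn1 : ∀ z, pmat (z.1 + 1 * a) (1 * b) (1 * c) (z.1 - 1 * a) (hd z) ≠ 1 := by
    intro z hz
    rw [pmat_eq_one_iff] at hz
    obtain ⟨e1, e2, e3⟩ := hz
    apply hA
    refine ⟨by simpa using e1, by simpa using e2, ?_⟩
    apply mul_left_cancel₀ h2; linear_combination e3
  have hbij : Function.Bijective f := by
    constructor
    · rintro (_ | z) (_ | w) hzw
      · rfl
      · exact absurd (congrArg Subtype.val hzw).symm (hn1 w)
      · exact absurd (congrArg Subtype.val hzw) (hn1 z)
      · have := congrArg Subtype.val hzw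
        simp only [f] at this
        rw [pmat_eq_iff] at this
        obtain ⟨k, hk, e1, e2, e3, e4⟩ := this
        have f1 : a = k * a := by apply mul_left_cancel₀ h2; linear_combination e1 - e4
        have hk1 : k = 1 := by
          apply mul_right_cancel₀ h
          linear_combination a * f1 + c * e2
        subst hk1
        congr 1
        apply Subtype.ext
        linear_combination -e1
    · rintro ⟨g, u, v, huv, rfl⟩
      by_cases hv : v = 0
      · subst hv
        refine ⟨none, Subtype.ext ?_⟩
        symm
        simp only [f, Subgroup.coe_one]
        rw [pmat_eq_one_iff]; simp
      · refine ⟨some ⟨u / v, ?_⟩, Subtype.ext ?_⟩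
        · intro h0
          apply huv
          field_simp at h0
          linear_combination h0
        · simp only [f]
          rw [pmat_eq_iff]
          refine ⟨v, hv, ?_, ?_, ?_, ?_⟩ <;> field_simp
  rw [← Nat.card_congr (Equiv.ofBijective f hbij), Nat.card_eq_fintype_card, Fintype.card_option]
  have hsplit := Fintype.card_subtype_compl (fun z : F => z * z = a * a + b * c)
  have hle := Fintype.card_subtype_le (fun z : F => z * z = a * a + b * c)
  change Fintype.card {z : F // z * z ≠ a * a + b * c} = _ at hsplit
  rw [hsplit]
  by_cases hs : IsSquare (a * a + b * c)
  · right
    obtain ⟨s, hs⟩ := hs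
    have hs0 : s ≠ 0 := by
      rintro rfl
      apply h; linear_combination -hs
    have hne : s ≠ -s := by
      intro h0
      apply hs0
      apply mul_left_cancel₀ h2; linear_combination h0
    have : Fintype.card {z : F // z * z = a * a + b * c} = 2 := by
      rw [Fintype.card_subtype, Finset.card_eq_two]
      refine ⟨s, -s, hne, ?_⟩
      ext z
      simp only [Finset.mem_filter, Finset.mem_univ, true_and, Finset.mem_insert, Finset.mem_singleton]
      rw [hs, mul_self_eq_mul_self_iff]
    rw [this] at hle ⊢
    omega
  · left
    have : Fintype.card {z : F // z * z = a * a + b * c} = 0 := by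
      rw [Fintype.card_eq_zero_iff]
      exact ⟨fun z => hs ⟨z.1, z.2.symm⟩⟩
    rw [this]
    omega
end Dih

section Final

variable {F : Type} [Field F]

lemma cent_ne_top (h2 : (2 : F) ≠ 0) {a b c : F} (h : a * (-a) - b * c ≠ 0) :
    Subgroup.centralizer {pmat a b c (-a) h} ≠ ⊤ := by
  intro htop
  have hall : ∀ g : ProjectiveGL2 F, g * pmat a b c (-a) h = pmat a b c (-a) h * g := by
    intro g
    have : g ∈ Subgroup.centralizer {pmat a b c (-a) h} := by rw [htop]; trivial
    exact Subgroup.mem_centralizer_singleton_iff.1 this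
  have h1 : (1 : F) * 1 - 1 * 0 ≠ 0 := by simp
  have h1' : (1 : F) * 1 - 0 * 1 ≠ 0 := by simp
  have m1 : pmat 1 1 0 1 h1 ∈ torus a b c := by
    by_contra hn
    have := cent_sq h2 (hall _) hn
    rw [pmat_mul, pmat_eq_one_iff] at this
    apply h2
    linear_combination this.1
  have m2 : pmat 1 0 1 1 h1' ∈ torus a b c := by
    by_contra hn
    have := cent_sq h2 (hall _) hn
    rw [pmat_mul, pmat_eq_one_iff] at this
    apply h2
    linear_combination this.2.1
  have := torus_comm _ _ m1 m2
  rw [pmat_mul, pmat_mul, pmat_eq_iff] at this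
  obtain ⟨k, hk, e1, e2, e3, e4⟩ := this
  have hk1 : k = 1 := by linear_combination -e2
  subst hk1
  apply one_ne_zero (α := F)
  linear_combination -e1

lemma cent_dihedral [Fintype F] (hodd : Odd (Fintype.card F)) {a b c : F} (h : a * (-a) - b * c ≠ 0) :
    Nonempty (Subgroup.centralizer {pmat a b c (-a) h} ≃* DihedralGroup (Fintype.card F + 1)) ∨
    Nonempty (Subgroup.centralizer {pmat a b c (-a) h} ≃* DihedralGroup (Fintype.card F - 1)) := by
  have h2 : (2 : F) ≠ 0 := Ring.two_ne_zero (two_ne_of_odd hodd)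
  obtain ⟨s, hs, hsT⟩ := exists_refl h2 h
  have key := dihedral_of (torus a b c) (Subgroup.centralizer {pmat a b c (-a) h}) (torus_cyclic hodd h)
    (fun g hg => Subgroup.mem_centralizer_singleton_iff.2 (torus_comm _ _ hg (t_mem_torus h))) s
    (Subgroup.mem_centralizer_singleton_iff.2 hs) hsT
    (fun g hg hgT => cent_sq h2 (Subgroup.mem_centralizer_singleton_iff.1 hg) hgT)
    (fun g hg hgT => cent_mul h2 hs hsT (Subgroup.mem_centralizer_singleton_iff.1 hg) hgT)
  rcases torus_card h2 h with e | e
  · left; rwa [e] at key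
  · right; rwa [e] at key

lemma klein_case [Fintype F] (h2 : (2 : F) ≠ 0) {a b c a' b' c' : F} (h : a * (-a) - b * c ≠ 0)
    (h' : a' * (-a') - b' * c' ≠ 0) (hne : pmat a b c (-a) h ≠ pmat a' b' c' (-a') h')
    (x : ProjectiveGL2 F) (hx : orderOf x = 2) (H : Subgroup (ProjectiveGL2 F))
    (hxH : Subgroup.zpowers x < H)
    (hc : ∀ g ∈ H, g * pmat a b c (-a) h = pmat a b c (-a) h * g)
    (hc' : ∀ g ∈ H, g * pmat a' b' c' (-a') h' = pmat a' b' c' (-a') h' * g) : IsKleinFour H := by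
  classical
  have htriv : ∀ g, g ∈ torus a b c → g ∈ torus a' b' c' → g = 1 := by
    intro g hg hg'
    by_contra h1
    exact hne (torus_inter h2 h h' hg hg' h1)
  have hsq : ∀ g ∈ H, g * g = 1 := by
    intro g hg
    by_cases h1 : g ∈ torus a b c
    · by_cases h3 : g ∈ torus a' b' c'
      · rw [htriv g h1 h3, one_mul]
      · exact cent_sq h2 (hc' g hg) h3
    · exact cent_sq h2 (hc g hg) h1
  let f : H → Prop × Prop := fun g => (g.1 ∈ torus a b c, g.1 ∈ torus a' b' c')
  have hf : Function.Injective f := by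
    rintro ⟨g, hg⟩ ⟨k, hk⟩ he
    have e1 : (g ∈ torus a b c) = (k ∈ torus a b c) := congrArg Prod.fst he
    have e2 : (g ∈ torus a' b' c') = (k ∈ torus a' b' c') := congrArg Prod.snd he
    have m1 : g * k ∈ torus a b c := by
      by_cases hh : g ∈ torus a b c
      · exact Subgroup.mul_mem _ hh (e1 ▸ hh)
      · exact cent_mul h2 (hc g hg) hh (hc k hk) (fun hk' => hh (e1 ▸ hk'))
    have m2 : g * k ∈ torus a' b' c' := by
      by_cases hh : g ∈ torus a' b' c'
      · exact Subgroup.mul_mem _ hh (e2 ▸ hh)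
      · exact cent_mul h2 (hc' g hg) hh (hc' k hk) (fun hk' => hh (e2 ▸ hk'))
    have := htriv _ m1 m2
    apply Subtype.ext
    exact mul_right_cancel (this.trans (hsq k hk).symm)
  have hfin : Finite H := Finite.of_injective f hf
  have hle : Nat.card H ≤ 4 := by
    have := Nat.card_le_card_of_injective f hf
    rw [Nat.card_prod] at this
    simpa using this
  have hdvd : 2 ∣ Nat.card H := by
    have := Subgroup.card_dvd_of_le hxH.le
    rwa [Nat.card_zpowers, hx] at this
  have hgt : 2 ≠ Nat.card H := by
    intro he
    apply hxH.ne
    apply Subgroup.eq_of_le_of_card_ge hxH.le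
    rw [← he, Nat.card_zpowers, hx]
  have hpos : 0 < Nat.card H := Nat.card_pos
  have h4 : Nat.card H = 4 := by omega
  refine ⟨h4, ?_⟩
  have hnt : Nontrivial H := by
    rw [← Finite.one_lt_card_iff_nontrivial]; omega
  have hd : Monoid.exponent H ∣ 2 := by
    apply Monoid.exponent_dvd_of_forall_pow_eq_one
    rintro ⟨g, hg⟩
    apply Subtype.ext
    rw [pow_two]
    exact hsq g hg
  rcases (Nat.dvd_prime Nat.prime_two).1 hd with e | e
  · rw [Monoid.exp_eq_one_iff] at e
    exact absurd e (not_subsingleton _)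
  · exact e

end Final


/-- Any proper subgroup of `PGL₂(q)` strictly containing `⟨x⟩` (for `x` an outer
involution) which is an intersection of a nonempty family of maximal subgroups is
dihedral of order `2(q+1)`, dihedral of order `2(q-1)`, or a Klein four-group. -/
theorem intersection_of_maximals_above_outer_involution (p n : ℕ) (hp : Nat.Prime p) (hodd : Odd p) (hn : 1 ≤ n)
    (F : Type) [Field F] [Fintype F] (hF : Fintype.card F = p ^ 2 ^ n)
    (x : ProjectiveGL2 F) (hx : orderOf x = 2) (hxS : x ∉ socleSL2 F)
    (H : Subgroup (ProjectiveGL2 F)) (hHtop : H ≠ ⊤)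
    (hxH : Subgroup.zpowers x < H)
    (hint : ∃ 𝓜 : Set (Subgroup (ProjectiveGL2 F)),
      𝓜.Nonempty ∧ (∀ M ∈ 𝓜, IsCoatom M) ∧ H = sInf 𝓜) :
    Nonempty (H ≃* DihedralGroup (p ^ 2 ^ n + 1)) ∨
      Nonempty (H ≃* DihedralGroup (p ^ 2 ^ n - 1)) ∨ IsKleinFour ↥H := by
  have hx1 : x ≠ 1 := by
    rintro rfl
    simp at hx
  have hx2 : x * x = 1 := by
    have := pow_orderOf_eq_one x
    rwa [hx, pow_two] at this
  have hoddF : Odd (Fintype.card F) := by rw [hF]; exact hodd.pow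
  have h2 : (2 : F) ≠ 0 := Ring.two_ne_zero (two_ne_of_odd hoddF)
  obtain ⟨𝓜, hne, hco, rfl⟩ := hint
  have hcent : ∀ M ∈ 𝓜, ∃ (a b c : F) (h : a * (-a) - b * c ≠ 0),
      M = Subgroup.centralizer {pmat a b c (-a) h} := by
    intro M hM
    have hxM : x ∈ M := Subgroup.mem_sInf.1 (hxH.le (Subgroup.mem_zpowers x)) M hM
    obtain ⟨t, ht1, ht2, ht⟩ := key_thm p n hp hodd hn F hF x hx1 hx2 hxS M (hco M hM).1 hxM
    obtain ⟨a, b, c, h, rfl⟩ := involution_form ht1 ht2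
    refine ⟨a, b, c, h, ?_⟩
    have hle : M ≤ Subgroup.centralizer {pmat a b c (-a) h} :=
      fun g hg => Subgroup.mem_centralizer_singleton_iff.2 (ht g hg)
    rcases hle.eq_or_lt with e | e
    · exact e
    · exact absurd ((hco M hM).2 _ e) (cent_ne_top h2 h)
  obtain ⟨M, hM⟩ := hne
  obtain ⟨a, b, c, h, hMe⟩ := hcent M hM
  by_cases hall : ∀ N ∈ 𝓜, N = M
  · have hs : sInf 𝓜 = Subgroup.centralizer {pmat a b c (-a) h} := by
      rw [← hMe]
      apply le_antisymm (sInf_le hM)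
      exact le_sInf (fun N hN => (hall N hN).ge)
    rw [hs, ← hF]
    rcases cent_dihedral hoddF h with e | e
    · exact Or.inl e
    · exact Or.inr (Or.inl e)
  · right; right
    push Not at hall
    obtain ⟨N, hN, hNM⟩ := hall
    obtain ⟨a', b', c', h', hNe⟩ := hcent N hN
    refine klein_case h2 h h' ?_ x hx _ hxH ?_ ?_
    · intro he
      apply hNM
      rw [hNe, hMe, he]
    · intro g hg
      have := Subgroup.mem_sInf.1 hg M hM
      rw [hMe] at this
      exact Subgroup.mem_centralizer_singleton_iff.1 this
    · intro g hg
      have := Subgroup.mem_sInf.1 hg N hN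
      rw [hNe] at this
      exact Subgroup.mem_centralizer_singleton_iff.1 this
end

section
/- Let p be an odd prime, n ≥ 1, q = p^(2^n), and G = PGL₂(F_q). Fix an involution x ∈ G not lying in the image of SL₂(F_q) in G, and let C = C_G(x). Then x is central in C, the set of involutions of C other than x has cardinality q+1, and these q+1 involutions partition into (q+1)/2 pairs {t, xt}, each pair together with x and the identity forming a Klein four-subgroup; distinct pairs give distinct Klein four-subgroups. -/
open Matrix

section AbstractGroup

variable {G : Type*} [Group G]

/-- The subgroup generated by two commuting involutions, listed explicitly. -/
lemma mem_closure_pair_iff (x t : G) (hx : x * x = 1) (ht : t * t = 1) (hc : x * t = t * x)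
    (z : G) : z ∈ Subgroup.closure ({x, t} : Set G) ↔ z = 1 ∨ z = x ∨ z = t ∨ z = x * t := by
  have e1 : ∀ a, x * (x * a) = a := fun a => by rw [← mul_assoc, hx, one_mul]
  have e2 : ∀ a, t * (t * a) = a := fun a => by rw [← mul_assoc, ht, one_mul]
  have e3 : ∀ a, t * (x * a) = x * (t * a) := fun a => by rw [← mul_assoc, ← hc, mul_assoc]
  constructor
  · intro h
    induction h using Subgroup.closure_induction with
    | mem y hy =>
      rcases hy with rfl | rfl <;> simp
    | one => simp
    | mul a b _ _ ha hb =>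
      rcases ha with rfl | rfl | rfl | rfl <;> rcases hb with rfl | rfl | rfl | rfl <;>
        simp [hx, ht, mul_assoc, e1, e2, e3, ← hc]
    | inv a _ ha =>
      have i1 : x⁻¹ = x := inv_eq_of_mul_eq_one_left hx
      have i2 : t⁻¹ = t := inv_eq_of_mul_eq_one_left ht
      rcases ha with rfl | rfl | rfl | rfl <;> simp [i1, i2, hc]
  · have h1 : x ∈ Subgroup.closure ({x, t} : Set G) := Subgroup.subset_closure (by simp)
    have h2 : t ∈ Subgroup.closure ({x, t} : Set G) := Subgroup.subset_closure (by simp)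
    rintro (rfl | rfl | rfl | rfl)
    · exact one_mem _
    · exact h1
    · exact h2
    · exact mul_mem h1 h2

lemma orderOf_two_iff (t : G) : orderOf t = 2 ↔ t * t = 1 ∧ t ≠ 1 := by
  rw [orderOf_eq_prime_iff, pow_two]

lemma kleinFour_closure_pair (x t : G) (hx : x * x = 1) (ht : t * t = 1) (hc : x * t = t * x)
    (hx1 : x ≠ 1) (ht1 : t ≠ 1) (hne : t ≠ x) :
    IsKleinFour ↥(Subgroup.closure ({x, t} : Set G)) := by
  have hmem := mem_closure_pair_iff x t hx ht hc
  have hxt1 : x * t ≠ 1 := fun h => hne (by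
    have := inv_eq_of_mul_eq_one_left hx
    rw [← this]; exact eq_inv_of_mul_eq_one_right h)
  have hset : ((Subgroup.closure ({x, t} : Set G) : Subgroup G) : Set G) = {1, x, t, x * t} := by
    ext z; simpa using hmem z
  constructor
  · change Nat.card ((Subgroup.closure ({x, t} : Set G) : Subgroup G) : Set G) = 4
    rw [hset, Nat.card_coe_set_eq]
    classical
    have : ({1, x, t, x * t} : Set G) = (({1, x, t, x * t} : Finset G) : Set G) := by simp
    rw [this, Set.ncard_coe_finset]
    rw [Finset.card_insert_of_notMem, Finset.card_insert_of_notMem, Finset.card_insert_of_notMem,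
      Finset.card_singleton]
    · simpa using hx1
    · simpa using ⟨hne.symm, ht1⟩
    · simpa using ⟨hx1.symm, ht1.symm, hxt1.symm⟩
  · apply Nat.dvd_antisymm
    · apply Monoid.exponent_dvd_of_forall_pow_eq_one
      rintro ⟨z, hz⟩
      rw [hmem] at hz
      ext
      rw [pow_two]
      change z * z = 1
      rcases hz with rfl | rfl | rfl | rfl
      · simp
      · exact hx
      · exact ht
      · rw [mul_assoc, ← mul_assoc t, ← hc, mul_assoc, ht, mul_one, hx]
    · have h1 : x ∈ Subgroup.closure ({x, t} : Set G) := Subgroup.subset_closure (by simp)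
      have h2 : orderOf (⟨x, h1⟩ : Subgroup.closure ({x, t} : Set G)) = 2 := by
        rw [Subgroup.orderOf_mk, orderOf_two_iff]; exact ⟨hx, hx1⟩
      rw [← h2]; exact Monoid.order_dvd_exponent _

/-- A two-to-one map. -/
lemma ncard_eq_two_mul_image {α β : Type*} (S : Set α) (hS : S.Finite) (f : α → β)
    (s : α → α) (hs : ∀ a ∈ S, s a ∈ S) (hne : ∀ a ∈ S, s a ≠ a)
    (hf : ∀ a ∈ S, ∀ b ∈ S, f a = f b ↔ b = a ∨ b = s a) :
    S.ncard = 2 * (f '' S).ncard := by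
  classical
  lift S to Finset α using hS
  rw [← Finset.coe_image, Set.ncard_coe_finset, Set.ncard_coe_finset,
    Finset.card_eq_sum_card_image f S, mul_comm, ← smul_eq_mul, ← Finset.sum_const]
  apply Finset.sum_congr rfl
  intro v hv
  obtain ⟨a, ha, rfl⟩ := Finset.mem_image.1 hv
  have : S.filter (fun b => f b = f a) = {a, s a} := by
    ext b
    simp only [Finset.mem_filter, Finset.mem_insert, Finset.mem_singleton]
    constructor
    · rintro ⟨hb, h⟩
      exact (hf a ha b hb).1 h.symm
    · intro h
      have hb : b ∈ S := by
        rcases h with rfl | rfl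
        · exact ha
        · exact hs a ha
      exact ⟨hb, ((hf a ha b hb).2 h).symm⟩
  rw [this, Finset.card_pair (hne a ha).symm]

end AbstractGroup

section PGL

variable {F : Type} [Field F]

lemma pgl_mk_eq_iff_s15 (g h : GL (Fin 2) F) :
    (QuotientGroup.mk g : ProjectiveGL2 F) = QuotientGroup.mk h ↔
      ∃ r : F, ∀ i j, h.val i j = r * g.val i j := by
  rw [← QuotientGroup.mk'_apply, ← QuotientGroup.mk'_apply, QuotientGroup.mk'_eq_mk']
  constructor
  · rintro ⟨z, hz, rfl⟩
    obtain ⟨r, hr⟩ := Matrix.GeneralLinearGroup.mem_center_iff_val_mem_range_scalar.1 hz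
    refine ⟨r, fun i j => ?_⟩
    rw [Matrix.GeneralLinearGroup.coe_mul, ← hr]
    simp [mul_comm]
  · rintro ⟨r, hr⟩
    have hr0 : r ≠ 0 := by
      rintro rfl
      apply Matrix.GeneralLinearGroup.det_ne_zero h
      simp [Matrix.det_fin_two, hr]
    refine ⟨Matrix.GeneralLinearGroup.scalar (Fin 2) (Units.mk0 r hr0), ?_, ?_⟩
    · rw [Matrix.GeneralLinearGroup.center_eq_range_scalar]
      exact ⟨_, rfl⟩
    · apply Matrix.GeneralLinearGroup.ext
      intro i j
      rw [Matrix.GeneralLinearGroup.coe_mul, hr, Matrix.GeneralLinearGroup.coe_scalar]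
      simp [mul_comm]

lemma pgl_mk_eq_iff' (g h : GL (Fin 2) F) :
    (QuotientGroup.mk g : ProjectiveGL2 F) = QuotientGroup.mk h ↔
      ∃ r : F, h.val 0 0 = r * g.val 0 0 ∧ h.val 0 1 = r * g.val 0 1 ∧
        h.val 1 0 = r * g.val 1 0 ∧ h.val 1 1 = r * g.val 1 1 := by
  rw [pgl_mk_eq_iff_s15]
  simp [Fin.forall_fin_two, and_assoc]

lemma pgl_involution_iff (h2 : (2 : F) ≠ 0) (h : GL (Fin 2) F) :
    orderOf (QuotientGroup.mk h : ProjectiveGL2 F) = 2 ↔ h.val 1 1 = - h.val 0 0 := by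
  have hd := Matrix.GeneralLinearGroup.det_ne_zero h
  rw [Matrix.det_fin_two] at hd
  have e1 : (1 : ProjectiveGL2 F) = QuotientGroup.mk (1 : GL (Fin 2) F) := rfl
  rw [orderOf_two_iff, ← QuotientGroup.mk_mul, e1, ne_eq, eq_comm, pgl_mk_eq_iff',
    @eq_comm _ (QuotientGroup.mk h), pgl_mk_eq_iff']
  simp only [Matrix.GeneralLinearGroup.coe_mul, Matrix.GeneralLinearGroup.coe_one,
    Matrix.mul_apply, Fin.sum_univ_two, Matrix.one_apply_eq, ne_eq, zero_ne_one, not_false_eq_true,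
    Matrix.one_apply_ne, one_ne_zero, mul_one, mul_zero]
  generalize h.val 0 0 = a at *
  generalize h.val 0 1 = b at *
  generalize h.val 1 0 = c at *
  generalize h.val 1 1 = d at *
  constructor
  · rintro ⟨⟨r, h00, h01, h10, h11⟩, hn⟩
    by_contra hne
    have hs : a + d ≠ 0 := fun h => hne (by linear_combination h)
    have hb : b = 0 := by
      refine (mul_eq_zero.1 (?_ : (a + d) * _ = 0)).resolve_left hs
      linear_combination h01
    have hc : c = 0 := by
      refine (mul_eq_zero.1 (?_ : (a + d) * _ = 0)).resolve_left hs
      linear_combination h10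
    have had : a - d = 0 := by
      refine (mul_eq_zero.1 (?_ : (a + d) * _ = 0)).resolve_left hs
      linear_combination h00 - h11
    exact hn ⟨a, rfl, hb, hc, by linear_combination -had⟩
  · rintro rfl
    refine ⟨⟨a * a + b * c, rfl, by ring, by ring, by ring⟩, ?_⟩
    rintro ⟨r, rfl, rfl, rfl, h⟩
    have : 2 * a = 0 := by linear_combination -h
    have : a = 0 := (mul_eq_zero.1 this).resolve_left h2
    apply hd; rw [this]; ring

/-- For two involutions, commuting and distinct means orthogonal for the trace form. -/
lemma pgl_commute_iff (h2 : (2 : F) ≠ 0) (g h : GL (Fin 2) F)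
    (hg : g.val 1 1 = - g.val 0 0) (hh : h.val 1 1 = - h.val 0 0) (hb : g.val 0 1 ≠ 0) :
    ((QuotientGroup.mk h * QuotientGroup.mk g : ProjectiveGL2 F)
        = QuotientGroup.mk g * QuotientGroup.mk h ∧
      (QuotientGroup.mk h : ProjectiveGL2 F) ≠ QuotientGroup.mk g) ↔
    2 * g.val 0 0 * h.val 0 0 + g.val 0 1 * h.val 1 0 + g.val 1 0 * h.val 0 1 = 0 := by
  have hd := Matrix.GeneralLinearGroup.det_ne_zero g
  have hd' := Matrix.GeneralLinearGroup.det_ne_zero h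
  rw [Matrix.det_fin_two] at hd hd'
  rw [← QuotientGroup.mk_mul, ← QuotientGroup.mk_mul, pgl_mk_eq_iff', ne_eq,
    @eq_comm _ (QuotientGroup.mk h), pgl_mk_eq_iff']
  simp only [Matrix.GeneralLinearGroup.coe_mul, Matrix.mul_apply, Fin.sum_univ_two]
  rw [hg] at hd ⊢
  rw [hh] at hd' ⊢
  generalize g.val 0 0 = a at *
  generalize g.val 0 1 = b at *
  generalize g.val 1 0 = c at *
  generalize h.val 0 0 = u at *
  generalize h.val 0 1 = v at *
  generalize h.val 1 0 = w at *
  constructor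
  · rintro ⟨⟨r, h00, h01, h10, h11⟩, hn⟩
    by_contra hT
    have hr : r = 1 := by
      have : (r - 1) * (2 * a * u + b * w + c * v) = 0 := by linear_combination - h00 - h11
      exact sub_eq_zero.1 ((mul_eq_zero.1 this).resolve_right hT)
    subst hr
    have k1 : a * v - b * u = 0 := by
      refine (mul_eq_zero.1 (?_ : (2 : F) * _ = 0)).resolve_left h2
      linear_combination h01
    have k2 : b * w - c * v = 0 := by linear_combination h00
    refine hn ⟨v / b, ?_, ?_, ?_, ?_⟩
    · field_simp; linear_combination -k1
    · field_simp
    · field_simp; linear_combination k2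
    · field_simp; linear_combination k1
  · intro hT
    refine ⟨⟨-1, by linear_combination hT, by ring, by ring, by linear_combination hT⟩, ?_⟩
    rintro ⟨r, rfl, rfl, rfl, _⟩
    have : (2 * r) * (a * -a - b * c) = 0 := by linear_combination -hT
    rcases mul_eq_zero.1 this with h | h
    · have : r = 0 := (mul_eq_zero.1 h).resolve_left h2
      subst this
      apply hd'; ring
    · exact hd h

/-- An element of `PGL₂` whose determinant is a square lies in the socle. -/
lemma pgl_mem_socle (g : GL (Fin 2) F) (s : F) (hs : g.val.det = s * s) :
    (QuotientGroup.mk g : ProjectiveGL2 F) ∈ socleSL2 F := by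
  have hd := Matrix.GeneralLinearGroup.det_ne_zero g
  have hs0 : s ≠ 0 := by
    rintro rfl
    simp [hs] at hd
  have hdet : (s⁻¹ • g.val).det = 1 := by
    rw [Matrix.det_smul, hs]
    simp
    field_simp
  refine ⟨⟨s⁻¹ • g.val, hdet⟩, ?_⟩
  · change (QuotientGroup.mk (Matrix.SpecialLinearGroup.toGL ⟨s⁻¹ • g.val, hdet⟩) :
      ProjectiveGL2 F) = QuotientGroup.mk g
    rw [pgl_mk_eq_iff_s15]
    refine ⟨s, fun i j => ?_⟩
    change g.val i j = s * (s⁻¹ * g.val i j)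
    rw [mul_inv_cancel_left₀ hs0]

/-- The matrix of trace zero orthogonal to `[[a, b], [c, -a]]` with top row `(u, v)`. -/
def orthMat (a b c u v : F) : Matrix (Fin 2) (Fin 2) F :=
  !![u, v; -(2 * a * u + c * v) / b, -u]

lemma orthMat_det_ne_zero {a b c : F} (hns : ¬ IsSquare (a * a + b * c)) (u v : F)
    (huv : u ≠ 0 ∨ v ≠ 0) : (orthMat a b c u v).det ≠ 0 := by
  have hb : b ≠ 0 := by
    rintro rfl
    exact hns ⟨a, by ring⟩
  rw [orthMat, Matrix.det_fin_two_of]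
  intro h
  field_simp at h
  have key : (b * u - a * v) * (b * u - a * v) = (a * a + b * c) * (v * v) := by
    linear_combination (-b) * h
  by_cases hv : v = 0
  · subst hv
    have hu : u ≠ 0 := by simpa using huv
    have : (b * u) * (b * u) = 0 := by linear_combination key
    simp [hb, hu] at this
  · apply hns
    refine ⟨(b * u - a * v) / v, ?_⟩
    field_simp
    linear_combination -key

/-- Representatives of the points of the projective line. -/
def lineRep : Option F → F × F
  | none => (1, 0)
  | some u => (u, 1)

lemma lineRep_ne (o : Option F) : (lineRep o).1 ≠ 0 ∨ (lineRep o).2 ≠ 0 := by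
  cases o <;> simp [lineRep]

/-- Involutions commuting with `[[a, b], [c, -a]]`, indexed by the projective line. -/
noncomputable def orthGL {a b c : F} (hns : ¬ IsSquare (a * a + b * c)) (o : Option F) :
    GL (Fin 2) F :=
  Matrix.GeneralLinearGroup.mkOfDetNeZero (orthMat a b c (lineRep o).1 (lineRep o).2)
    (orthMat_det_ne_zero hns _ _ (lineRep_ne o))

lemma orthGL_val {a b c : F} (hns : ¬ IsSquare (a * a + b * c)) (o : Option F) :
    (orthGL hns o).val = orthMat a b c (lineRep o).1 (lineRep o).2 := rfl

lemma orthGL_injective {a b c : F} (hns : ¬ IsSquare (a * a + b * c)) :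
    Function.Injective (fun o => (QuotientGroup.mk (orthGL hns o) : ProjectiveGL2 F)) := by
  intro o o' h
  obtain ⟨r, h1, h2, -, -⟩ := (pgl_mk_eq_iff' _ _).1 h
  rw [orthGL_val, orthGL_val] at h1 h2
  cases o <;> cases o' <;> simp [lineRep, orthMat] at h1 h2 ⊢
  · rw [← h2] at h1; simp at h1
  · rw [← h2] at h1; simp at h1; exact h1.symm

lemma pgl_involutions_ncard [Fintype F] (h2 : (2 : F) ≠ 0) (g : GL (Fin 2) F)
    (hg : g.val 1 1 = - g.val 0 0)
    (hns : ¬ IsSquare (g.val 0 0 * g.val 0 0 + g.val 0 1 * g.val 1 0)) :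
    {y : ProjectiveGL2 F | y * QuotientGroup.mk g = QuotientGroup.mk g * y ∧
      orderOf y = 2 ∧ y ≠ QuotientGroup.mk g}.ncard = Fintype.card F + 1 := by
  have hb : g.val 0 1 ≠ 0 := by
    intro h
    exact hns ⟨g.val 0 0, by rw [h]; ring⟩
  have : {y : ProjectiveGL2 F | y * QuotientGroup.mk g = QuotientGroup.mk g * y ∧
      orderOf y = 2 ∧ y ≠ QuotientGroup.mk g} =
      (fun o => (QuotientGroup.mk (orthGL hns o) : ProjectiveGL2 F)) '' Set.univ := by
    ext y
    rw [Set.image_univ, Set.mem_range, Set.mem_setOf_eq]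
    constructor
    · rintro ⟨hc, ho, hne⟩
      induction y using QuotientGroup.induction_on with
      | H h =>
      have hh := (pgl_involution_iff h2 h).1 ho
      have hT := (pgl_commute_iff h2 g h hg hh hb).1 ⟨hc, hne⟩
      by_cases hv : h.val 0 1 = 0
      · refine ⟨none, (pgl_mk_eq_iff' _ _).2 ⟨h.val 0 0, ?_⟩⟩
        rw [orthGL_val]
        simp only [lineRep, orthMat, Matrix.of_apply, Matrix.cons_val', Matrix.cons_val_zero,
          Matrix.cons_val_one, Matrix.cons_val_fin_one, hv, hh]
        rw [hv] at hT
        refine ⟨by ring, by ring, ?_, by ring⟩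
        field_simp
        linear_combination hT
      · refine ⟨some (h.val 0 0 / h.val 0 1), (pgl_mk_eq_iff' _ _).2 ⟨h.val 0 1, ?_⟩⟩
        rw [orthGL_val]
        simp only [lineRep, orthMat, Matrix.of_apply, Matrix.cons_val', Matrix.cons_val_zero,
          Matrix.cons_val_one, Matrix.cons_val_fin_one, hh]
        refine ⟨by field_simp, by ring, ?_, by field_simp⟩
        field_simp
        linear_combination hT
    · rintro ⟨o, rfl⟩
      have hh : (orthGL hns o).val 1 1 = - (orthGL hns o).val 0 0 := by
        simp [orthGL_val, orthMat]
      have := (pgl_commute_iff h2 g (orthGL hns o) hg hh hb).2 (by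
        simp only [orthGL_val, orthMat, Matrix.of_apply, Matrix.cons_val', Matrix.cons_val_zero,
          Matrix.cons_val_one, Matrix.cons_val_fin_one]
        field_simp
        ring)
      exact ⟨this.1, (pgl_involution_iff h2 _).2 hh, this.2⟩
  rw [this, Set.ncard_image_of_injective _ (orthGL_injective hns), Set.ncard_univ,
    Nat.card_eq_fintype_card, Fintype.card_option]

end PGL

/-- Structure of the involutions in the centralizer `C` of an outer involution `x` of
`PGL₂(q)`: `x` is central in `C`; `C` contains exactly `q+1` involutions other than
`x`; these pair up as `{t, x*t}`, each pair generating with `x` a Klein four-subgroup;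
distinct pairs give distinct Klein four-subgroups, so there are `(q+1)/2` of them. -/
theorem involutions_in_centralizer_outer_involution (p n : ℕ) (hp : Nat.Prime p) (hodd : Odd p) (hn : 1 ≤ n)
    (F : Type) [Field F] [Fintype F] (hF : Fintype.card F = p ^ 2 ^ n)
    (x : ProjectiveGL2 F) (hx : orderOf x = 2) (hxS : x ∉ socleSL2 F) :
    (∀ c ∈ Subgroup.centralizer ({x} : Set (ProjectiveGL2 F)), c * x = x * c) ∧
    {y : ProjectiveGL2 F |
        y ∈ Subgroup.centralizer ({x} : Set (ProjectiveGL2 F)) ∧ orderOf y = 2 ∧ y ≠ x}.ncard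
      = p ^ 2 ^ n + 1 ∧
    (∀ t, t ∈ Subgroup.centralizer ({x} : Set (ProjectiveGL2 F)) → orderOf t = 2 → t ≠ x →
      x * t ∈ Subgroup.centralizer ({x} : Set (ProjectiveGL2 F)) ∧ orderOf (x * t) = 2 ∧
        x * t ≠ x ∧ x * t ≠ t ∧ IsKleinFour ↥(Subgroup.closure {x, t})) ∧
    (∀ t t', t ∈ Subgroup.centralizer ({x} : Set (ProjectiveGL2 F)) → orderOf t = 2 → t ≠ x →
      t' ∈ Subgroup.centralizer ({x} : Set (ProjectiveGL2 F)) → orderOf t' = 2 → t' ≠ x →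
      (Subgroup.closure {x, t} = Subgroup.closure {x, t'} ↔ t' = t ∨ t' = x * t)) ∧
    {V : Subgroup (ProjectiveGL2 F) |
        ∃ t, t ∈ Subgroup.centralizer ({x} : Set (ProjectiveGL2 F)) ∧ orderOf t = 2 ∧
          t ≠ x ∧ V = Subgroup.closure {x, t}}.ncard
      = (p ^ 2 ^ n + 1) / 2 := by
  have hcardodd : Odd (Fintype.card F) := hF ▸ hodd.pow
  have h2 : (2 : F) ≠ 0 := by
    apply Ring.two_ne_zero
    intro h
    have := FiniteField.even_card_iff_char_two.1 h
    rw [Nat.odd_iff] at hcardodd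
    omega
  have hmod : Fintype.card F % 4 = 1 := by
    obtain ⟨m, rfl⟩ : ∃ m, n = m + 1 := ⟨n - 1, by omega⟩
    obtain ⟨k, hk⟩ := (hodd.pow : Odd (p ^ 2 ^ m))
    rw [hF, pow_succ, pow_mul, hk]
    ring_nf
    omega
  have hneg : IsSquare (-1 : F) := FiniteField.isSquare_neg_one_iff.2 (by omega)
  have hcent : ∀ c, c ∈ Subgroup.centralizer ({x} : Set (ProjectiveGL2 F)) ↔ c * x = x * c := by
    intro c
    rw [Subgroup.mem_centralizer_singleton_iff]
  obtain ⟨hxx, hx1⟩ := (orderOf_two_iff x).1 hx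
  have hcount : {y : ProjectiveGL2 F |
        y ∈ Subgroup.centralizer ({x} : Set (ProjectiveGL2 F)) ∧ orderOf y = 2 ∧ y ≠ x}.ncard
      = p ^ 2 ^ n + 1 := by
    simp only [hcent]
    clear hcent hxx hx1
    induction x using QuotientGroup.induction_on with
    | H g =>
    have hg := (pgl_involution_iff h2 g).1 hx
    rw [← hF]
    apply pgl_involutions_ncard h2 g hg
    rintro ⟨s, hs⟩
    obtain ⟨i, hi⟩ := hneg
    apply hxS
    apply pgl_mem_socle g (i * s)
    rw [Matrix.det_fin_two, hg]
    linear_combination (-1) * hs + s * s * hi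
  have hpair : ∀ t, t ∈ Subgroup.centralizer ({x} : Set (ProjectiveGL2 F)) → orderOf t = 2 →
      t ≠ x → x * t ∈ Subgroup.centralizer ({x} : Set (ProjectiveGL2 F)) ∧ orderOf (x * t) = 2 ∧
        x * t ≠ x ∧ x * t ≠ t ∧ IsKleinFour ↥(Subgroup.closure {x, t}) := by
    intro t htc hto htx
    obtain ⟨htt, ht1⟩ := (orderOf_two_iff t).1 hto
    rw [hcent] at htc
    refine ⟨?_, ?_, ?_, ?_, kleinFour_closure_pair x t hxx htt htc.symm hx1 ht1 htx⟩
    · rw [hcent, mul_assoc, htc]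
    · rw [orderOf_two_iff]
      refine ⟨?_, fun h => htx ?_⟩
      · rw [mul_assoc, ← mul_assoc t, htc, mul_assoc, htt, mul_one, hxx]
      · exact mul_left_cancel (h.trans hxx.symm)
    · simpa using ht1
    · simpa using hx1
  have hiff : ∀ t t', t ∈ Subgroup.centralizer ({x} : Set (ProjectiveGL2 F)) → orderOf t = 2 →
      t ≠ x → t' ∈ Subgroup.centralizer ({x} : Set (ProjectiveGL2 F)) → orderOf t' = 2 →
      t' ≠ x → (Subgroup.closure {x, t} = Subgroup.closure {x, t'} ↔ t' = t ∨ t' = x * t) := by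
    intro t t' htc hto htx htc' hto' htx'
    obtain ⟨htt, ht1⟩ := (orderOf_two_iff t).1 hto
    obtain ⟨htt', ht1'⟩ := (orderOf_two_iff t').1 hto'
    rw [hcent] at htc htc'
    have hm := mem_closure_pair_iff x t hxx htt htc.symm
    have hm' := mem_closure_pair_iff x t' hxx htt' htc'.symm
    constructor
    · intro h
      have : t' ∈ Subgroup.closure ({x, t} : Set (ProjectiveGL2 F)) := by
        rw [h]; exact Subgroup.subset_closure (by simp)
      rcases (hm t').1 this with h | h | h | h
      · exact absurd h ht1'
      · exact absurd h htx'
      · exact Or.inl h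
      · exact Or.inr h
    · rintro (rfl | rfl)
      · rfl
      · ext z
        rw [hm, hm', ← mul_assoc, hxx, one_mul]
        tauto
  refine ⟨fun c hc => (hcent c).1 hc, hcount, hpair, hiff, ?_⟩
  have himg : {V : Subgroup (ProjectiveGL2 F) |
        ∃ t, t ∈ Subgroup.centralizer ({x} : Set (ProjectiveGL2 F)) ∧ orderOf t = 2 ∧
          t ≠ x ∧ V = Subgroup.closure {x, t}} =
      (fun t => Subgroup.closure ({x, t} : Set (ProjectiveGL2 F))) '' {y : ProjectiveGL2 F |
        y ∈ Subgroup.centralizer ({x} : Set (ProjectiveGL2 F)) ∧ orderOf y = 2 ∧ y ≠ x} := by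
    ext V
    constructor
    · rintro ⟨t, a, b, c, rfl⟩
      exact ⟨t, ⟨a, b, c⟩, rfl⟩
    · rintro ⟨t, ⟨a, b, c⟩, rfl⟩
      exact ⟨t, a, b, c, rfl⟩
  have htwo := ncard_eq_two_mul_image {y : ProjectiveGL2 F |
        y ∈ Subgroup.centralizer ({x} : Set (ProjectiveGL2 F)) ∧ orderOf y = 2 ∧ y ≠ x}
      (Set.finite_of_ncard_pos (by rw [hcount]; omega))
      (fun t => Subgroup.closure ({x, t} : Set (ProjectiveGL2 F))) (fun t => x * t)
      (fun a ha => by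
        obtain ⟨h1, h2, h3, -, -⟩ := hpair a ha.1 ha.2.1 ha.2.2
        exact ⟨h1, h2, h3⟩)
      (fun a ha => (hpair a ha.1 ha.2.1 ha.2.2).2.2.2.1)
      (fun a ha b hb => hiff a b ha.1 ha.2.1 ha.2.2 hb.1 hb.2.1 hb.2.2)
  rw [himg]
  omega
end
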